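/- arXiv:2605.24668 — 4 statements merged into one kernel-verified Lean document; each statement's English description precedes it below -/
import Mathlib

section
/- Let G be a unicyclic graph with unique cycle C, and let F = G − V(C) be the graph obtained by deleting all vertices of C. Then the characteristic polynomial of the adjacency matrix of G satisfies φ_G(x) = μ_G(x) − 2·μ_F(x), where μ_H denotes the matching polynomial. -/
variable {V : Type*}

/-- Number of matchings of size `j` in `H` (sets of `j` pairwise vertex-disjoint edges). -/
noncomputable def mcount (H : SimpleGraph V) (j : ℕ) : ℕ :=
  Set.ncard {M : Finset (Sym2 V) | (∀ e ∈ M, e ∈ H.edgeSet) ∧ M.card = j ∧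
    ∀ e ∈ M, ∀ f ∈ M, e ≠ f → ∀ v : V, ¬(v ∈ e ∧ v ∈ f)}

/-- The matching polynomial of `H`, as a function on `ℂ`. -/
noncomputable def matchPolyFun [Fintype V] (H : SimpleGraph V) (x : ℂ) : ℂ :=
  ∑ j ∈ Finset.range (Fintype.card V / 2 + 1),
    (-1 : ℂ) ^ j * (mcount H j : ℂ) * x ^ (Fintype.card V - 2 * j)

/-- The characteristic polynomial `det (x • 1 - A(G))` of the adjacency matrix, as a function. -/
noncomputable def charFun [Fintype V] [DecidableEq V] (G : SimpleGraph V)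
    [DecidableRel G.Adj] (x : ℂ) : ℂ :=
  (x • (1 : Matrix V V ℂ) - G.adjMatrix ℂ).det

/-- The adjacency matrix of a graph is Hermitian (symmetric). -/
theorem adjHerm [Fintype V] [DecidableEq V] (G : SimpleGraph V) [DecidableRel G.Adj] :
    (G.adjMatrix ℝ).IsHermitian := by
  rw [Matrix.IsHermitian, Matrix.conjTranspose_eq_transpose_of_trivial]
  exact SimpleGraph.isSymm_adjMatrix G

/-- Positive square energy. -/
noncomputable def sPlus [Fintype V] [DecidableEq V] (G : SimpleGraph V) [DecidableRel G.Adj] : ℝ :=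
  ∑ i, if 0 < (adjHerm G).eigenvalues i then ((adjHerm G).eigenvalues i) ^ 2 else 0

/-- Negative square energy. -/
noncomputable def sMinus [Fintype V] [DecidableEq V] (G : SimpleGraph V) [DecidableRel G.Adj] : ℝ :=
  ∑ i, if (adjHerm G).eigenvalues i < 0 then ((adjHerm G).eigenvalues i) ^ 2 else 0

section helpers

open Equiv Finset

/-- A permutation moves every point along an edge of `H` or fixes it. -/
def Compat (H : SimpleGraph V) (σ : Perm V) : Prop := ∀ i, σ i = i ∨ H.Adj (σ i) i

/-- The permutation is an involution. -/
def Invol (σ : Perm V) : Prop := ∀ i, σ (σ i) = i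

/-- The set of matchings. -/
def IsMat (H : SimpleGraph V) (M : Finset (Sym2 V)) : Prop :=
  (∀ e ∈ M, e ∈ H.edgeSet) ∧ ∀ e ∈ M, ∀ f ∈ M, e ≠ f → ∀ v : V, ¬(v ∈ e ∧ v ∈ f)

theorem invol_sign [Fintype V] [DecidableEq V] {σ : Perm V} (h : Invol σ) :
    2 ∣ #σ.support ∧ Perm.sign σ = (-1) ^ (#σ.support / 2) := by
  have h2 : σ ^ 2 = 1 := by
    ext i; simpa [pow_two] using h i
  have hrep : σ.cycleType = Multiset.replicate (Multiset.card σ.cycleType) 2 := by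
    rw [Multiset.eq_replicate]
    refine ⟨rfl, fun b hb => ?_⟩
    have h1 := Perm.two_le_of_mem_cycleType hb
    have h3 := (Perm.dvd_of_mem_cycleType hb).trans (orderOf_dvd_of_pow_eq_one h2)
    exact le_antisymm (Nat.le_of_dvd (by norm_num) h3) h1
  have hs : #σ.support = Multiset.card σ.cycleType * 2 := by
    rw [← Perm.sum_cycleType]
    conv_lhs => rw [hrep]
    simp
  refine ⟨⟨_, by rw [hs, mul_comm]⟩, ?_⟩
  rw [Perm.sign_of_cycleType, Perm.sum_cycleType, hs, Nat.mul_div_cancel _ (by norm_num), pow_add,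
    mul_comm _ 2, pow_mul]
  simp

theorem prod_compat [Fintype V] [DecidableEq V] (G : SimpleGraph V) [DecidableRel G.Adj]
    (x : ℂ) {σ : Perm V} (h : Compat G σ) :
    ∏ i, (x • (1 : Matrix V V ℂ) - G.adjMatrix ℂ) (σ i) i =
      (-1) ^ #σ.support * x ^ (Fintype.card V - #σ.support) := by
  have : ∀ i, (x • (1 : Matrix V V ℂ) - G.adjMatrix ℂ) (σ i) i =
      if i ∈ σ.support then -1 else x := by
    intro i
    by_cases hi : σ i = i
    · simp [hi]
    · simp [hi, (h i).resolve_left hi]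
  rw [Finset.prod_congr rfl (fun i _ => this i), Finset.prod_ite]
  simp only [prod_const]
  rw [Finset.filter_mem_eq_inter, Finset.univ_inter]
  congr 2
  rw [← Finset.card_compl]
  congr 1
  ext; simp

theorem prod_not_compat [Fintype V] [DecidableEq V] (G : SimpleGraph V) [DecidableRel G.Adj]
    (x : ℂ) {σ : Perm V} (h : ¬ Compat G σ) :
    ∏ i, (x • (1 : Matrix V V ℂ) - G.adjMatrix ℂ) (σ i) i = 0 := by
  unfold Compat at h
  push Not at h
  obtain ⟨i, h1, h2⟩ := h
  refine Finset.prod_eq_zero (mem_univ i) ?_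
  simp [h1, h2]

/-- The matching attached to a permutation. -/
def matOf [Fintype V] [DecidableEq V] (σ : Perm V) : Finset (Sym2 V) :=
  σ.support.image fun i => s(i, σ i)

theorem mk_mem_matOf [Fintype V] [DecidableEq V] {σ : Perm V} (h : Invol σ) (a b : V) :
    s(a, b) ∈ matOf σ ↔ σ a = b ∧ a ≠ b := by
  unfold matOf
  simp only [mem_image, Perm.mem_support, Sym2.eq_iff]
  constructor
  · rintro ⟨i, hi, ⟨rfl, rfl⟩ | ⟨rfl, rfl⟩⟩
    · exact ⟨rfl, fun h => hi h.symm⟩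
    · exact ⟨h i, hi⟩
  · rintro ⟨rfl, hne⟩
    exact ⟨a, fun h => hne h.symm, Or.inl ⟨rfl, rfl⟩⟩

theorem isMat_matOf [Fintype V] [DecidableEq V] {H : SimpleGraph V} {σ : Perm V} (h : Invol σ)
    (hc : Compat H σ) : IsMat H (matOf σ) := by
  constructor
  · intro e he
    induction e with | h a b =>
    rw [mk_mem_matOf h] at he
    obtain ⟨rfl, hne⟩ := he
    exact ((hc a).resolve_left (fun h => hne h.symm)).symm
  · rintro e he f hf hne v ⟨hve, hvf⟩
    obtain ⟨a, rfl⟩ := hve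
    obtain ⟨b, rfl⟩ := hvf
    rw [mk_mem_matOf h] at he hf
    exact hne (by rw [← he.1, ← hf.1])

theorem card_matOf [Fintype V] [DecidableEq V] {H : SimpleGraph V} {σ : Perm V} (h : Invol σ)
    (hc : Compat H σ) : #σ.support = 2 * #(matOf σ) := by
  have hm := isMat_matOf h hc
  have : σ.support = (matOf σ).biUnion Sym2.toFinset := by
    ext i
    simp only [mem_biUnion, Sym2.mem_toFinset, Perm.mem_support]
    constructor
    · intro hi
      exact ⟨s(i, σ i), (mk_mem_matOf h _ _).2 ⟨rfl, fun h => hi h.symm⟩, by simp⟩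
    · rintro ⟨e, he, b, rfl⟩
      rw [mk_mem_matOf h] at he
      rw [he.1]; exact he.2.symm
  rw [this, card_biUnion]
  · rw [Finset.sum_congr rfl (g := fun _ => 2)]
    · simp [mul_comm]
    · intro e he
      exact Sym2.card_toFinset_of_not_isDiag _ (H.not_isDiag_of_mem_edgeSet (hm.1 e he))
  · intro e he f hf hne
    refine Finset.disjoint_left.2 ?_
    intro a ha hb
    rw [Sym2.mem_toFinset] at ha hb
    exact hm.2 e he f hf hne a ⟨ha, hb⟩

theorem exists_perm_of_isMat [Fintype V] [DecidableEq V] {H : SimpleGraph V}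
    {M : Finset (Sym2 V)} (hM : IsMat H M) : ∃ σ : Perm V, Invol σ ∧ Compat H σ ∧ matOf σ = M := by
  classical
  have key : ∀ v, ∃ w, s(v, w) ∈ M ∨ (v = w ∧ ∀ u, s(v, u) ∉ M) := by
    intro v
    by_cases h : ∃ u, s(v, u) ∈ M
    · obtain ⟨u, hu⟩ := h; exact ⟨u, Or.inl hu⟩
    · push Not at h; exact ⟨v, Or.inr ⟨rfl, h⟩⟩
  choose f hf using key
  have huniq : ∀ a b d, s(a, b) ∈ M → s(a, d) ∈ M → b = d := by
    intro a b d h1 h2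
    by_contra hne
    exact hM.2 _ h1 _ h2 (fun h => hne (by grind [Sym2.eq_iff])) a ⟨by simp, by simp⟩
  have hinv : ∀ v, f (f v) = v := by
    intro v
    rcases hf v with h | ⟨h, h'⟩
    · rcases hf (f v) with h2 | ⟨h2, h2'⟩
      · exact huniq _ _ _ h2 (by rwa [Sym2.eq_swap])
      · exact absurd (by rwa [Sym2.eq_swap]) (h2' v)
    · rw [← h, ← h]
  refine ⟨⟨f, f, hinv, hinv⟩, hinv, ?_, ?_⟩
  · intro i
    change f i = i ∨ _
    rcases hf i with h | ⟨h, h'⟩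
    · right; exact (hM.1 _ h : H.Adj _ _).symm
    · left; exact h.symm
  · ext e
    induction e with | h a b =>
    rw [mk_mem_matOf (by exact hinv)]
    change f a = b ∧ _ ↔ _
    constructor
    · rintro ⟨rfl, hne⟩
      rcases hf a with h | ⟨h, h'⟩
      · exact h
      · exact absurd h hne
    · intro h
      refine ⟨?_, (hM.1 _ h : H.Adj _ _).ne⟩
      rcases hf a with h1 | ⟨h1, h'⟩
      · exact huniq _ _ _ h1 h
      · exact absurd h (h' b)

open Classical in
theorem matchPolyFun_eq [Fintype V] [DecidableEq V] (H : SimpleGraph V) (x : ℂ) :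
    matchPolyFun H x = ∑ σ : Perm V with Invol σ ∧ Compat H σ,
      (-1 : ℂ) ^ (#σ.support / 2) * x ^ (Fintype.card V - #σ.support) := by
  have hcount : ∀ j, mcount H j = #{σ : Perm V | (Invol σ ∧ Compat H σ) ∧ #σ.support / 2 = j} := by
    intro j
    unfold mcount
    rw [← Set.ncard_coe_finset]
    symm
    refine Set.ncard_congr (fun σ _ => matOf σ) ?_ ?_ ?_
    · intro σ hσ
      simp only [coe_filter, mem_univ, true_and, Set.mem_ofPred_eq] at hσ
      have h1 := isMat_matOf hσ.1.1 hσ.1.2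
      have h2 := card_matOf hσ.1.1 hσ.1.2
      exact ⟨h1.1, by omega, h1.2⟩
    · intro σ τ hσ hτ h
      simp only [coe_filter, mem_univ, true_and, Set.mem_ofPred_eq] at hσ hτ
      ext i
      by_cases hi : σ i = i
      · by_contra hne
        have h1 : s(i, τ i) ∈ matOf τ := by
          rw [mk_mem_matOf hτ.1.1]
          exact ⟨rfl, fun h => hne (by rw [hi, ← h])⟩
        rw [← h, mk_mem_matOf hσ.1.1] at h1
        exact hne h1.1
      · have h1 : s(i, σ i) ∈ matOf σ := by
          rw [mk_mem_matOf hσ.1.1]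
          exact ⟨rfl, fun h => hi h.symm⟩
        rw [h, mk_mem_matOf hτ.1.1] at h1
        exact h1.1.symm
    · rintro M ⟨h1, h2, h3⟩
      obtain ⟨σ, ha, hb, hc⟩ := exists_perm_of_isMat (H := H) (M := M) ⟨h1, h3⟩
      refine ⟨σ, ?_, hc⟩
      have h2' := card_matOf ha hb
      simp only [coe_filter, mem_univ, true_and, Set.mem_ofPred_eq]
      rw [hc] at h2'
      exact ⟨⟨ha, hb⟩, by omega⟩
  unfold matchPolyFun
  rw [← Finset.sum_fiberwise_of_maps_to (t := Finset.range (Fintype.card V / 2 + 1))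
    (g := fun σ : Perm V => #σ.support / 2)]
  · refine Finset.sum_congr rfl fun j _ => ?_
    rw [hcount, Finset.filter_filter, Finset.sum_congr rfl
      (g := fun _ => (-1 : ℂ) ^ j * x ^ (Fintype.card V - 2 * j))]
    · rw [sum_const, nsmul_eq_mul]; ring
    · intro σ hσ
      simp only [mem_filter, mem_univ, true_and] at hσ
      have := card_matOf hσ.1.1 hσ.1.2
      rw [hσ.2, show #σ.support = 2 * j by omega]
  · intro σ _
    rw [mem_range]
    have : #σ.support ≤ Fintype.card V := card_le_univ _
    have := Nat.div_le_div_right (c := 2) this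
    omega

theorem compat_inv {G : SimpleGraph V} {σ : Perm V} (h : Compat G σ) : Compat G σ⁻¹ := by
  intro i
  rcases h (σ⁻¹ i) with h | h
  · left; rw [show σ (σ⁻¹ i) = i from σ.apply_symm_apply i] at h; exact h.symm
  · right; rw [show σ (σ⁻¹ i) = i from σ.apply_symm_apply i] at h; exact h.symm

open Classical in
theorem cycle_sum [Fintype V] [DecidableEq V] (G : SimpleGraph V) [DecidableRel G.Adj] (x : ℂ)
    (S : Set V) [Fintype S] (ε : Perm V) (hcyc : ε.IsCycle) (hS : ∀ i, i ∈ S ↔ ε i = i)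
    (hε : Compat G ε) :
    ∑ σ : Perm V with Compat G σ ∧ (∀ i, ε i ≠ i → σ i = ε i) ∧ (∀ i, ε i = i → σ (σ i) = i),
      ((Perm.sign σ : ℤ) : ℂ) * ∏ i, (x • (1 : Matrix V V ℂ) - G.adjMatrix ℂ) (σ i) i =
    - matchPolyFun (G.induce S) x := by
  rw [matchPolyFun_eq, ← sum_neg_distrib]
  have hnot : ∀ (ρ : Perm S) i, ε i ≠ i → (ε * Perm.ofSubtype ρ) i = ε i := by
    intro ρ i hi
    rw [Perm.mul_apply, Perm.ofSubtype_apply_of_not_mem]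
    exact fun h => hi ((hS i).1 h)
  have hmem : ∀ (ρ : Perm S) i (hi : i ∈ S), (ε * Perm.ofSubtype ρ) i = ρ ⟨i, hi⟩ := by
    intro ρ i hi
    rw [Perm.mul_apply, Perm.ofSubtype_apply_of_mem ρ hi]
    exact (hS _).1 (ρ ⟨i, hi⟩).2
  have hcompat : ∀ ρ : Perm S, Compat (G.induce S) ρ → Compat G (ε * Perm.ofSubtype ρ) := by
    intro ρ h2 i
    by_cases hi : i ∈ S
    · rw [hmem ρ i hi]
      rcases h2 ⟨i, hi⟩ with h | h
      · left; rw [h]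
      · right; exact h
    · rw [hnot ρ i (fun h => hi ((hS i).2 h))]
      exact hε i
  symm
  refine Finset.sum_bij (fun ρ _ => ε * Perm.ofSubtype ρ) ?_ ?_ ?_ ?_
  · intro ρ hρ
    simp only [mem_filter, mem_univ, true_and] at hρ ⊢
    obtain ⟨h1, h2⟩ := hρ
    refine ⟨hcompat ρ h2, hnot ρ, ?_⟩
    intro i hi
    have hi' := (hS i).2 hi
    rw [hmem ρ i hi', hmem ρ _ (ρ ⟨i, hi'⟩).2]
    exact congrArg Subtype.val (h1 ⟨i, hi'⟩)
  · intro ρ _ ρ' _ h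
    exact Perm.ofSubtype_injective (mul_left_cancel h)
  · intro σ hσ
    simp only [mem_filter, mem_univ, true_and] at hσ
    obtain ⟨h1, h2, h3⟩ := hσ
    have hout : ∀ i, ε i ≠ i → ε (σ i) ≠ σ i := by
      intro i hi h
      rw [h2 i hi] at h
      exact hi (ε.injective h)
    have hin : ∀ i, ε i = i → ε (σ i) = σ i := by
      intro i hi
      by_contra h
      have := hout _ h
      rw [h3 i hi] at this
      exact this hi
    have hg : ∀ i, ε i = i → (ε⁻¹ * σ) i = σ i := by
      intro i hi
      rw [Perm.mul_apply, Perm.inv_eq_iff_eq, hin i hi]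
    have hg' : ∀ i, ε i ≠ i → (ε⁻¹ * σ) i = i := by
      intro i hi
      rw [Perm.mul_apply, Perm.inv_eq_iff_eq, h2 i hi]
    have hp : ∀ i, (ε⁻¹ * σ) i ∈ S ↔ i ∈ S := by
      intro i
      by_cases hi : ε i = i
      · rw [hg i hi, hS, hS]; exact ⟨fun _ => hi, fun _ => hin i hi⟩
      · rw [hg' i hi]
    refine ⟨(ε⁻¹ * σ).subtypePerm hp, ?_, ?_⟩
    · simp only [mem_filter, mem_univ, true_and]
      constructor
      · rintro ⟨i, hi⟩
        apply Subtype.ext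
        have hi' := (hS i).1 hi
        change (ε⁻¹ * σ) ((ε⁻¹ * σ) i) = i
        rw [hg i hi', hg _ (hin i hi'), h3 i hi']
      · rintro ⟨i, hi⟩
        have hi' := (hS i).1 hi
        rw [Subtype.ext_iff]
        change (ε⁻¹ * σ) i = i ∨ G.Adj ((ε⁻¹ * σ) i) i
        rw [hg i hi']
        exact h1 i
    · rw [Perm.ofSubtype_subtypePerm, mul_inv_cancel_left]
      intro i hi
      rw [hS]
      by_contra h
      exact hi (hg' i h)
  · intro ρ hρ
    simp only [mem_filter, mem_univ, true_and] at hρ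
    obtain ⟨h1, h2⟩ := hρ
    rw [prod_compat G x (hcompat ρ h2), Perm.sign_mul, Perm.sign_ofSubtype, hcyc.sign]
    have hdisj : Perm.Disjoint ε (Perm.ofSubtype ρ) := by
      intro i
      by_cases hi : ε i = i
      · left; exact hi
      · right; exact Perm.ofSubtype_apply_of_not_mem ρ (fun h => hi ((hS i).1 h))
    obtain ⟨⟨s, hs⟩, hsign⟩ := invol_sign h1
    have hs2 : #(Perm.ofSubtype ρ).support = 2 * s := by
      rw [Perm.support_ofSubtype, Finset.card_map, ← hs]
      congr!
    rw [hdisj.card_support_mul, hs2]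
    have hcard : Fintype.card V = #ε.support + Fintype.card S := by
      rw [← Finset.card_compl_add_card (ε.support), add_comm]
      congr 1
      rw [← Set.toFinset_card]
      congr 1
      ext i; simp [hS]
    rw [hcard, Nat.add_sub_add_left, hsign, hs]
    rw [Nat.mul_div_cancel_left _ (by norm_num), pow_add, pow_mul]
    push_cast
    have : ((-1 : ℂ) ^ #ε.support) * (-1 : ℂ) ^ #ε.support = 1 := by
      rw [← mul_pow]; simp
    simp only [even_two, Even.neg_pow, one_pow, mul_one]
    linear_combination ((-1 : ℂ) ^ s * x ^ (Fintype.card S - 2 * s)) * this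

theorem bridge_back [Fintype V] [DecidableEq V] {G : SimpleGraph V} {σ : Perm V}
    (h : Compat G σ) {u : V} (hb : G.IsBridge s(u, σ u)) : σ (σ u) = u := by
  classical
  rw [SimpleGraph.isBridge_iff] at hb
  set G' := G.deleteEdges {s(u, σ u)} with hG'
  by_contra hne
  have hmaps : ∀ w ∈ (univ.filter fun w => ¬ G'.Reachable u w),
      σ w ∈ (univ.filter fun w => ¬ G'.Reachable u w) := by
    intro w hw
    simp only [mem_filter, mem_univ, true_and] at hw ⊢
    intro hr
    rcases h w with h1 | h1
    · rw [h1] at hr; exact hw hr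
    · by_cases he : s(σ w, w) = s(u, σ u)
      · rw [Sym2.eq_iff] at he
        rcases he with ⟨h2, h3⟩ | ⟨h2, h3⟩
        · rw [h3] at h2; exact hne h2
        · rw [h2] at hr; exact hb hr
      · have : G'.Adj (σ w) w := by
          rw [hG', SimpleGraph.deleteEdges_adj]
          exact ⟨h1, by simpa using he⟩
        exact hw (hr.trans this.reachable)
  obtain ⟨w, hw, hwu⟩ := Finset.surj_on_of_inj_on_of_card_le (fun w _ => σ w) hmaps
    (fun _ _ _ _ h => σ.injective h) le_rfl (σ u) (by simpa using hb)
  have hwu' : u = w := σ.injective hwu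
  subst hwu'
  simp at hw

theorem follow [Fintype V] [DecidableEq V] {σ ε : Perm V} (hcyc : ε.IsCycle)
    (hyp : ∀ j, σ (σ j) ≠ j → ε j = σ j ∨ ε (σ j) = j) {i : V} (hi : σ (σ i) ≠ i)
    (hi' : ε i = σ i) : ∀ j, ε j ≠ j → σ j = ε j := by
  have key : ∀ k : ℕ, σ ((ε ^ k) i) = ε ((ε ^ k) i) ∧ σ (σ ((ε ^ k) i)) ≠ (ε ^ k) i := by
    intro k
    induction k with
    | zero => exact ⟨hi'.symm, hi⟩
    | succ k ih =>
      obtain ⟨h1, h2⟩ := ih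
      rw [pow_succ', Perm.mul_apply]
      set j := (ε ^ k) i
      rw [← h1]
      have h3 : σ (σ (σ j)) ≠ σ j := fun h => h2 (σ.injective h)
      refine ⟨?_, h3⟩
      rcases hyp _ h3 with h | h
      · exact h.symm
      · exfalso
        apply h2
        apply ε.injective
        rw [h, h1]
  intro j hj
  have hm : ε i ≠ i := by
    intro h
    rw [hi'] at h
    exact hi (by rw [h, h])
  obtain ⟨k, rfl⟩ := hcyc.exists_pow_eq hm hj
  exact (key k).1

theorem main_of_perm [Fintype V] [DecidableEq V] (G : SimpleGraph V) [DecidableRel G.Adj] (x : ℂ)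
    (S : Set V) [Fintype S] (τ : Perm V) (hcyc : τ.IsCycle) (h3 : 3 ≤ #τ.support)
    (hS : ∀ i, i ∈ S ↔ τ i = i) (hτ : Compat G τ)
    (hbr : ∀ a b, G.Adj a b → ¬ G.IsBridge s(a, b) → τ a = b ∨ τ b = a) :
    charFun G x = matchPolyFun G x - 2 * matchPolyFun (G.induce S) x := by
  classical
  have hS' : ∀ i, i ∈ S ↔ τ⁻¹ i = i := by
    intro i; rw [hS, Perm.inv_eq_iff_eq, eq_comm]
  have c1 := cycle_sum G x S τ hcyc hS hτ
  have c2 := cycle_sum G x S τ⁻¹ hcyc.inv hS' (compat_inv hτ)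
  obtain ⟨p, hp, -⟩ := id hcyc
  have hpp : τ (τ p) ≠ p := by
    intro h
    have h2 : τ ^ 2 = 1 := hcyc.pow_eq_one_iff.2 ⟨p, hp, by simpa [pow_two] using h⟩
    have := Nat.le_of_dvd (by norm_num) (orderOf_dvd_of_pow_eq_one h2)
    rw [hcyc.orderOf] at this
    omega
  have hpi : τ⁻¹ p ≠ p := fun h => hp (by rw [Perm.inv_eq_iff_eq] at h; exact h.symm)
  have hpp' : τ⁻¹ p ≠ τ p := fun h => hpp (by rw [Perm.inv_eq_iff_eq] at h; exact h.symm)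
  unfold charFun
  rw [Matrix.det_apply', ← Finset.sum_filter_add_sum_filter_not univ (fun σ => Compat G σ),
    Finset.sum_eq_zero (s := univ.filter fun σ => ¬ Compat G σ), add_zero,
    ← Finset.sum_filter_add_sum_filter_not _ (fun σ => Invol σ)]
  · have e1 : ∑ σ : Perm V with Compat G σ ∧ Invol σ, ((Perm.sign σ : ℤ) : ℂ) *
        ∏ i, (x • (1 : Matrix V V ℂ) - G.adjMatrix ℂ) (σ i) i = matchPolyFun G x := by
      rw [matchPolyFun_eq]
      refine Finset.sum_congr (by ext; simp [and_comm]) fun σ hσ => ?_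
      simp only [mem_filter, mem_univ, true_and] at hσ
      rw [prod_compat G x hσ.2]
      obtain ⟨⟨s, hs⟩, hsign⟩ := invol_sign hσ.1
      rw [hsign, hs, pow_mul]
      simp
    have e2 : (univ.filter fun σ : Perm V => Compat G σ ∧ ¬ Invol σ) =
        (univ.filter fun σ : Perm V => Compat G σ ∧ (∀ i, τ i ≠ i → σ i = τ i) ∧
          (∀ i, τ i = i → σ (σ i) = i)) ∪
        (univ.filter fun σ : Perm V => Compat G σ ∧ (∀ i, τ⁻¹ i ≠ i → σ i = τ⁻¹ i) ∧
          (∀ i, τ⁻¹ i = i → σ (σ i) = i)) := by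
      ext σ
      simp only [mem_filter, mem_univ, true_and, mem_union]
      constructor
      · rintro ⟨hc, hni⟩
        have hyp : ∀ j, σ (σ j) ≠ j → τ j = σ j ∨ τ (σ j) = j := by
          intro j hj
          apply hbr
          · rcases hc j with h | h
            · exact absurd (by rw [h, h]) hj
            · exact h.symm
          · exact fun hb => hj (bridge_back hc hb)
        have hyp' : ∀ j, σ (σ j) ≠ j → τ⁻¹ j = σ j ∨ τ⁻¹ (σ j) = j := by
          intro j hj
          rcases hyp j hj with h | h
          · right; rw [Perm.inv_eq_iff_eq, h]
          · left; rw [Perm.inv_eq_iff_eq, h]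
        have hfix : ∀ j, τ j = j → σ (σ j) = j := by
          intro j hj
          by_contra hn
          rcases hyp j hn with h | h
          · have h' : σ j = j := by rw [← h, hj]
            exact hn (by rw [h', h'])
          · have h' : σ j = j := τ.injective (by rw [h, hj])
            exact hn (by rw [h', h'])
        unfold Invol at hni
        push Not at hni
        obtain ⟨i, hi⟩ := hni
        rcases hyp i hi with h | h
        · left
          exact ⟨hc, follow hcyc hyp hi h, hfix⟩
        · right
          refine ⟨hc, follow hcyc.inv hyp' hi (by rw [Perm.inv_eq_iff_eq, h]), ?_⟩
          intro j hj
          exact hfix j (by rw [Perm.inv_eq_iff_eq] at hj; exact hj.symm)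
      · rintro (⟨hc, ha, hb⟩ | ⟨hc, ha, hb⟩)
        · refine ⟨hc, fun hi => hpp ?_⟩
          have := hi p
          rwa [ha p hp, ha _ (fun h => hp (τ.injective h))] at this
        · refine ⟨hc, fun hi => hpp' ?_⟩
          have := hi p
          rw [ha p hpi, ha _ (fun h => hpi (τ⁻¹.injective h))] at this
          rwa [Perm.inv_eq_iff_eq] at this
    rw [Finset.filter_filter, Finset.filter_filter, e1, e2, Finset.sum_union, c1, c2]
    · ring
    · rw [Finset.disjoint_left]
      intro σ ha hb
      simp only [mem_filter, mem_univ, true_and] at ha hb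
      exact hpp' (by rw [← ha.2.1 p hp, ← hb.2.1 p hpi])
  · intro σ hσ
    simp only [mem_filter, mem_univ, true_and] at hσ
    rw [prod_not_compat G x hσ, mul_zero]

theorem cycle_perm [DecidableEq V] {G : SimpleGraph V} {v : V} (c : G.Walk v v)
    (hc : c.IsCycle) : ∀ k < c.length,
      c.support.tail.formPerm (c.getVert k) = c.getVert (k + 1) := by
  have hl : c.support.tail.length = c.length := by simp
  have h3 := hc.three_le_length
  have hget : ∀ k (hk : k < c.support.tail.length), c.support.tail[k] = c.getVert (k + 1) := by
    intro k hk
    rw [c.getVert_eq_support_getElem (by omega), List.getElem_tail]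
  intro k hk
  rcases k with _ | k
  · have h0 : c.getVert 0 = c.getVert ((c.length - 1) + 1) := by
      rw [Nat.sub_add_cancel (by omega)]; simp
    rw [h0, ← hget _ (by omega), List.formPerm_apply_getElem _ hc.support_nodup, hget]
    congr 2
    rw [hl, Nat.sub_add_cancel (by omega), Nat.mod_self]
  · rw [← hget _ (by omega), List.formPerm_apply_getElem _ hc.support_nodup, hget]
    congr 2
    rw [hl, Nat.mod_eq_of_lt hk]

theorem bridge_of_not_mem [Fintype V] [DecidableEq V] (G : SimpleGraph V)
    [DecidableRel G.Adj]
    (hconn : G.Connected) (hedge : G.edgeFinset.card = Fintype.card V)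
    (v : V) (c : G.Walk v v) (hc : c.IsCycle) (a b : V) (hab : G.Adj a b)
    (hb : ¬ G.IsBridge s(a, b)) : s(a, b) ∈ c.edges := by
  by_contra hn
  have h1 := hconn.connected_delete_edge_of_not_isBridge hb
  have htree : (G.deleteEdges {s(a, b)}).IsTree := by
    rw [SimpleGraph.isTree_iff_connected_and_card]
    refine ⟨h1, ?_⟩
    rw [SimpleGraph.edgeSet_deleteEdges, Nat.card_coe_set_eq,
      Set.ncard_sdiff_singleton_add_one (show s(a, b) ∈ G.edgeSet from hab) (Set.toFinite _),
      Nat.card_eq_fintype_card, ← hedge, ← SimpleGraph.coe_edgeFinset, Set.ncard_coe_finset]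
  exact htree.isAcyclic _ (hc.toDeleteEdges G {s(a, b)} (by
    intro e he h
    rw [Set.mem_singleton_iff] at h
    exact hn (h ▸ he)))

end helpers

/-- For a unicyclic graph `G` with unique cycle `C` and `F = G − V(C)`,
`φ_G(x) = μ_G(x) − 2 μ_F(x)`. -/
theorem charFun_eq_matchPoly_sub [Fintype V] [DecidableEq V] (G : SimpleGraph V)
    [DecidableRel G.Adj]
    (hconn : G.Connected) (hedge : G.edgeFinset.card = Fintype.card V)
    (v : V) (c : G.Walk v v) (hc : c.IsCycle) :
    ∀ x : ℂ, charFun G x =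
      matchPolyFun G x - 2 * matchPolyFun (G.induce ↑(c.support.toFinset)ᶜ) x := by

  intro x
  have h3 := hc.three_le_length
  have hl : c.support.tail.length = c.length := by simp
  have hcp := cycle_perm c hc
  have hsupp : c.support.tail.formPerm.support = c.support.tail.toFinset := by
    refine List.support_formPerm_of_nodup _ hc.support_nodup ?_
    intro y hy
    rw [hy] at hl
    simp at hl
    omega
  have hmem : ∀ i, i ∈ c.support ↔ c.support.tail.formPerm i ≠ i := by
    intro i
    rw [← Equiv.Perm.mem_support, hsupp, List.mem_toFinset]
    constructor
    · intro hi
      rw [SimpleGraph.Walk.mem_support_iff] at hi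
      rcases hi with rfl | hi
      · exact SimpleGraph.Walk.end_mem_tail_support hc.not_nil
      · exact hi
    · exact List.mem_of_mem_tail
  refine main_of_perm G x _ c.support.tail.formPerm
    (List.isCycle_formPerm hc.support_nodup (by omega)) ?_ ?_ ?_ ?_
  · rw [hsupp, List.toFinset_card_of_nodup hc.support_nodup, hl]; exact h3
  · intro i
    have := hmem i
    simp only [Finset.coe_compl, Set.mem_compl_iff, Finset.mem_coe, List.mem_toFinset]
    tauto
  · intro i
    by_cases hi : c.support.tail.formPerm i = i
    · exact Or.inl hi
    · right
      obtain ⟨k, rfl, hk⟩ := SimpleGraph.Walk.mem_support_iff_exists_getVert.1 ((hmem i).2 hi)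
      rcases hk.lt_or_eq with hk | rfl
      · rw [hcp k hk]
        exact (c.adj_getVert_succ hk).symm
      · have h0 : c.getVert c.length = c.getVert 0 := by simp
        rw [h0, hcp 0 (by omega)]
        exact (c.adj_getVert_succ (by omega)).symm
  · intro a b hab hb
    have := bridge_of_not_mem G hconn hedge v c hc a b hab hb
    rw [SimpleGraph.Walk.mk_mem_edges_iff_exists] at this
    obtain ⟨k, hk, he⟩ := this
    rw [Sym2.eq_iff] at he
    rcases he with ⟨rfl, rfl⟩ | ⟨rfl, rfl⟩
    · left; exact hcp k hk
    · right; exact hcp k hk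
end

section
/- Let G be a graph of order n. Then φ_G(x) = ∑_{H ∈ ℰ(G)} (−1)^{c(H)} · 2^{c∘(H)} · x^{n − v(H)}, where ℰ(G) is the set of elementary subgraphs of G (including the empty subgraph), c(H) the number of connected components of H, c∘(H) the number of cycle components, and v(H) the number of vertices of H. -/
variable {V : Type*}

/-- Degree of `v` in a subgraph `H`. -/
noncomputable def subDeg {G : SimpleGraph V} (H : G.Subgraph) (v : V) : ℕ :=
  (H.neighborSet v).ncard

/-- An elementary subgraph: every connected component is a single edge or a cycle.
Equivalently, every vertex has degree `1` or `2` and no vertex of degree `1` is adjacent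
to a vertex of degree `2`. -/
def IsElementary {G : SimpleGraph V} (H : G.Subgraph) : Prop :=
  (∀ v ∈ H.verts, subDeg H v = 1 ∨ subDeg H v = 2) ∧
  ∀ v w : V, H.Adj v w → subDeg H v = 1 → subDeg H w ≠ 2

/-- Number of connected components of a subgraph. -/
noncomputable def numComp {G : SimpleGraph V} (H : G.Subgraph) : ℕ :=
  Nat.card H.coe.ConnectedComponent

/-- Number of cycle components (components in which every vertex has degree `2`). -/
noncomputable def numCycComp {G : SimpleGraph V} (H : G.Subgraph) : ℕ :=
  Nat.card {K : H.coe.ConnectedComponent |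
    ∀ v : H.verts, H.coe.connectedComponentMk v = K → subDeg H ↑v = 2}

/-- `σ` is an orientation of `H`. -/
def Fib {G : SimpleGraph V} (σ : Equiv.Perm V) (H : G.Subgraph) : Prop :=
  (∀ v, v ∈ H.verts ↔ σ v ≠ v) ∧ ∀ v w, H.Adj v w ↔ v ≠ w ∧ (σ v = w ∨ σ w = v)

theorem Fib.nbr {G : SimpleGraph V} {σ : Equiv.Perm V} {H : G.Subgraph} (h : Fib σ H)
    {v : V} (hv : v ∈ H.verts) : H.neighborSet v = {σ v, σ.symm v} := by
  have h1 := (h.1 v).1 hv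
  ext w
  simp only [SimpleGraph.Subgraph.mem_neighborSet, h.2, Set.mem_insert_iff,
    Set.mem_singleton_iff]
  constructor
  · rintro ⟨_, h | h⟩
    · exact Or.inl h.symm
    · right; rw [← h]; simp
  · rintro (h | h)
    · subst h; exact ⟨h1.symm, Or.inl rfl⟩
    · subst h; refine ⟨fun h => h1 ?_, Or.inr (by simp)⟩
      conv_lhs => rw [h]
      simp

theorem Fib.deg_one {G : SimpleGraph V} {σ : Equiv.Perm V} {H : G.Subgraph} (h : Fib σ H)
    {v : V} (hv : v ∈ H.verts) (h1 : σ v = σ.symm v) : subDeg H v = 1 := by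
  rw [subDeg, h.nbr hv, ← h1]; simp

theorem Fib.deg_two {G : SimpleGraph V} {σ : Equiv.Perm V} {H : G.Subgraph} (h : Fib σ H)
    {v : V} (hv : v ∈ H.verts) (h1 : σ v ≠ σ.symm v) : subDeg H v = 2 := by
  rw [subDeg, h.nbr hv, Set.ncard_pair h1]

theorem Fib.mapsTo {G : SimpleGraph V} {σ : Equiv.Perm V} {H : G.Subgraph} (h : Fib σ H)
    {v : V} (hv : v ∈ H.verts) : H.Adj v (σ v) :=
  (h.2 _ _).2 ⟨((h.1 v).1 hv).symm, Or.inl rfl⟩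

theorem Fib.isElementary {G : SimpleGraph V} {σ : Equiv.Perm V} {H : G.Subgraph}
    (h : Fib σ H) : IsElementary H := by
  constructor
  · intro v hv
    by_cases h1 : σ v = σ.symm v
    · exact Or.inl (h.deg_one hv h1)
    · exact Or.inr (h.deg_two hv h1)
  · intro v w hvw hd
    have hv := hvw.fst_mem
    have hw := hvw.snd_mem
    have h1 : σ v = σ.symm v := by
      by_contra h1
      have := h.deg_two hv h1
      omega
    have h2 : σ w = σ.symm w := by
      have h3 : σ (σ v) = v := by rw [h1]; simp
      rw [Equiv.eq_symm_apply]
      rcases ((h.2 _ _).1 hvw).2 with h4 | h4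
      · rw [← h4, h3]
      · apply σ.injective; rw [h4, h3]
    rw [h.deg_one hw h2]; decide

theorem elem_deg {G : SimpleGraph V} {H : G.Subgraph} (he : IsElementary H) {v w : V}
    (h : H.Adj v w) : subDeg H v = subDeg H w := by
  have h1 := he.1 v h.fst_mem
  have h2 := he.1 w h.snd_mem
  have h3 := he.2 v w h
  have h4 := he.2 w v h.symm
  omega

theorem elem_nbr {G : SimpleGraph V} {H : G.Subgraph} (he : IsElementary H) {v w : V}
    (h : H.Adj v w) : ∃ b, H.neighborSet w = {v, b} := by
  have hv : v ∈ H.neighborSet w := h.symm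
  rcases he.1 w h.snd_mem with h1 | h1
  · obtain ⟨a, ha⟩ := Set.ncard_eq_one.1 h1
    rw [ha] at hv ⊢
    simp only [Set.mem_singleton_iff] at hv
    exact ⟨a, by simp [hv]⟩
  · obtain ⟨a, b, hab, ha⟩ := Set.ncard_eq_two.1 h1
    rw [ha] at hv ⊢
    rcases hv with hv | hv
    · exact ⟨b, by rw [hv]⟩
    · simp only [Set.mem_singleton_iff] at hv
      exact ⟨a, by rw [hv, Set.pair_comm]⟩

theorem pair_unique {a b c : V} (h : ({a, b} : Set V) = {a, c}) : b = c := by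
  have h1 : b ∈ ({a, c} : Set V) := h ▸ (by simp)
  have h2 : c ∈ ({a, b} : Set V) := h ▸ (by simp)
  simp only [Set.mem_insert_iff, Set.mem_singleton_iff] at h1 h2
  grind

theorem exists_key [Finite V] {G : SimpleGraph V} {H : G.Subgraph} (he : IsElementary H) :
    ∃ K : V → V → ℕ, (∀ a v b, H.neighborSet v = {a, b} → K a v = K v b) ∧
      ∀ a v b, H.neighborSet v = {a, b} → a ≠ b → K v a ≠ K v b := by
  classical
  choose nx hnx using fun p : {p : V × V // H.Adj p.1 p.2} => elem_nbr he p.2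
  let D := {p : V × V // H.Adj p.1 p.2}
  have hadj : ∀ p : D, H.Adj p.1.2 (nx p) := fun p => by
    have : nx p ∈ H.neighborSet p.1.2 := by rw [hnx p]; simp
    exact this
  let t : D → D := fun p => ⟨(p.1.2, nx p), hadj p⟩
  let r : D → D := fun p => ⟨(p.1.2, p.1.1), p.2.symm⟩
  have hr : ∀ p, r (r p) = p := fun p => rfl
  have trt : ∀ p, t (r (t p)) = r p := by
    intro p
    have h1 := hnx p
    have h2 := hnx (r (t p))
    apply Subtype.ext
    show (p.1.2, nx (r (t p))) = (p.1.2, p.1.1)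
    have h2' : H.neighborSet p.1.2 = {nx p, nx (r (t p))} := h2
    rw [h1, Set.pair_comm] at h2'
    rw [pair_unique h2']
  have hli : Function.LeftInverse (fun p => r (t (r p))) t := fun p => by
    show r (t (r (t p))) = p
    rw [trt, hr]
  have hri : Function.RightInverse (fun p => r (t (r p))) t := fun p => by
    show t (r (t (r p))) = p
    rw [trt, hr]
  let τ : Equiv.Perm D := ⟨t, fun p => r (t (r p)), hli, hri⟩
  have hτ : ∀ p, τ p = t p := fun _ => rfl
  have hpow : ∀ (m : ℕ) (d : D), (τ ^ m) (r ((τ ^ m) d)) = r d := by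
    intro m
    induction m with
    | zero => intro d; rfl
    | succ m ih =>
      intro d
      have e1 : (τ ^ (m+1)) d = τ ((τ ^ m) d) := by rw [pow_succ', Equiv.Perm.mul_apply]
      rw [e1, pow_succ, Equiv.Perm.mul_apply, hτ, hτ, trt, ih]
  have hdeg : ∀ (m : ℕ) (d : D), subDeg H ((τ ^ m) d).1.2 = subDeg H d.1.2 := by
    intro m
    induction m with
    | zero => intro d; rfl
    | succ m ih =>
      intro d
      rw [pow_succ, Equiv.Perm.mul_apply, ih, hτ]
      exact (elem_deg he (hadj d)).symm
  have hns : ∀ d : D, subDeg H d.1.2 = 2 → ¬ τ.SameCycle d (r d) := by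
    intro d hd hs
    obtain ⟨n, hn⟩ := hs.exists_nat_pow_eq
    obtain ⟨m, hm | hm⟩ := Nat.even_or_odd' n
    · have h1 : (τ ^ m) ((τ ^ m) d) = (τ ^ m) (r ((τ ^ m) d)) := by
        rw [hpow, ← hn, hm, two_mul, pow_add, Equiv.Perm.mul_apply]
      have h2 := (τ ^ m).injective h1
      have h3 := congrArg (fun p : D => p.1.1) h2
      have h4 := ((τ ^ m) d).2
      exact h4.ne h3
    · have h1 : (τ ^ m) (τ ((τ ^ m) d)) = (τ ^ m) (r ((τ ^ m) d)) := by
        rw [hpow, ← hn, hm, two_mul, ← Equiv.Perm.mul_apply, ← Equiv.Perm.mul_apply, ← pow_succ,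
          ← pow_add]
        congr 2; omega
      have h2 := (τ ^ m).injective h1
      have h3 : nx ((τ ^ m) d) = ((τ ^ m) d).1.1 := congrArg (fun p : D => p.1.2) h2
      have h4 := hnx ((τ ^ m) d)
      rw [h3] at h4
      have h5 := hdeg m d
      rw [hd, subDeg, h4] at h5
      simp at h5
  let Q := Quotient (Equiv.Perm.SameCycle.setoid τ)
  obtain ⟨k, ⟨ek⟩⟩ := Finite.exists_equiv_fin Q
  let key : D → ℕ := fun d => (ek (Quotient.mk _ d)).1
  have hkey : ∀ d d', key d = key d' ↔ τ.SameCycle d d' := by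
    intro d d'
    show (ek (Quotient.mk _ d)).1 = (ek (Quotient.mk _ d')).1 ↔ _
    rw [← Fin.ext_iff, ek.injective.eq_iff, Quotient.eq]
    rfl
  have hK1 : ∀ (a v b : V) (h1 : H.Adj a v) (h2 : H.Adj v b), H.neighborSet v = {a, b} →
      key ⟨(a, v), h1⟩ = key ⟨(v, b), h2⟩ := by
    intro a v b h1 h2 hN
    rw [hkey]
    have : (⟨(v, b), h2⟩ : D) = τ ⟨(a, v), h1⟩ := by
      apply Subtype.ext
      show (v, b) = (v, nx _)
      have := hnx ⟨(a, v), h1⟩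
      rw [pair_unique (hN.symm.trans this)]
    rw [this]
    exact Equiv.Perm.sameCycle_apply_right.2 (Equiv.Perm.SameCycle.refl _ _)
  have hab : ∀ a v b, H.neighborSet v = {a, b} → H.Adj v a ∧ H.Adj v b := by
    intro a v b hN
    exact ⟨show a ∈ H.neighborSet v by rw [hN]; simp, show b ∈ H.neighborSet v by rw [hN]; simp⟩
  refine ⟨fun a v => if h : H.Adj a v then key ⟨(a, v), h⟩ else 0, ?_, ?_⟩
  · intro a v b hN
    obtain ⟨ha, hb⟩ := hab a v b hN
    simp only [dif_pos ha.symm, dif_pos hb]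
    exact hK1 _ _ _ _ _ hN
  · intro a v b hN hne
    obtain ⟨ha, hb⟩ := hab a v b hN
    simp only [dif_pos ha, dif_pos hb]
    rw [← hK1 a v b ha.symm hb hN, Ne, hkey]
    apply hns
    rw [← elem_deg he ha, subDeg, hN, Set.ncard_pair hne]

theorem exists_fib [Finite V] {G : SimpleGraph V} {H : G.Subgraph} (he : IsElementary H) :
    ∃ σ : Equiv.Perm V, Fib σ H := by
  classical
  obtain ⟨K, hK1, hK2⟩ := exists_key he
  have hex : ∀ v : V, ∃ w, (v ∈ H.verts → H.Adj v w ∧ K v w ≤ K w v) ∧ (v ∉ H.verts → w = v) := by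
    intro v
    by_cases hv : v ∈ H.verts
    · have : ∃ a, H.Adj v a := by
        have h1 : H.neighborSet v ≠ ∅ := by
          intro h
          have := he.1 v hv
          simp [subDeg, h] at this
        exact Set.nonempty_iff_ne_empty.2 h1
      obtain ⟨a, ha⟩ := this
      obtain ⟨b, hb⟩ := elem_nbr he ha.symm
      have hvb : H.Adj v b := show b ∈ H.neighborSet v by rw [hb]; simp
      have e1 := hK1 a v b hb
      have e2 := hK1 b v a (by rw [hb, Set.pair_comm])
      rcases le_total (K v a) (K v b) with h | h
      · exact ⟨a, fun _ => ⟨ha, by omega⟩, fun h => absurd hv h⟩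
      · exact ⟨b, fun _ => ⟨hvb, by omega⟩, fun h => absurd hv h⟩
    · exact ⟨v, fun h => absurd h hv, fun _ => rfl⟩
  choose s hs1 hs2 using hex
  have pr : ∀ v a b, H.Adj v a → H.Adj v b → a ≠ b → H.neighborSet v = {a, b} := by
    intro v a b ha hb hne
    obtain ⟨c, hc⟩ := elem_nbr he ha.symm
    have : b ∈ H.neighborSet v := hb
    rw [hc] at this ⊢
    simp only [Set.mem_insert_iff, Set.mem_singleton_iff] at this
    rcases this with h | h
    · exact absurd h.symm hne
    · rw [h]
  have hmem : ∀ v, s v ∈ H.verts ↔ v ∈ H.verts := by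
    intro v
    by_cases hv : v ∈ H.verts
    · exact ⟨fun _ => hv, fun _ => (hs1 v hv).1.snd_mem⟩
    · rw [hs2 v hv]
  have hinj : Function.Injective s := by
    intro v v' h
    by_cases hv : v ∈ H.verts
    · have hv' : v' ∈ H.verts := by rw [← hmem, ← h, hmem]; exact hv
      by_contra hne
      obtain ⟨a1, k1⟩ := hs1 v hv
      obtain ⟨a2, k2⟩ := hs1 v' hv'
      rw [← h] at a2 k2
      have hN := pr _ _ _ a1.symm a2.symm hne
      have e1 := hK1 _ _ _ hN
      have e2 := hK1 v' (s v) v (by rw [hN, Set.pair_comm])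
      have e3 := hK2 _ _ _ hN hne
      omega
    · have hv' : v' ∉ H.verts := by rw [← hmem, ← h, hmem]; exact hv
      rw [hs2 v hv, hs2 v' hv'] at h
      exact h
  have huniq : ∀ v w, H.Adj v w → K v w ≤ K w v → s v = w := by
    intro v w h hk
    by_contra hne
    obtain ⟨a1, k1⟩ := hs1 v h.fst_mem
    have hN := pr _ _ _ a1 h hne
    have e1 := hK1 _ _ _ hN
    have e2 := hK1 w v (s v) (by rw [hN, Set.pair_comm])
    have e3 := hK2 _ _ _ hN hne
    omega
  refine ⟨Equiv.ofBijective s (Finite.injective_iff_bijective.1 hinj), ?_, ?_⟩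
  · intro v
    simp only [Equiv.ofBijective_apply]
    constructor
    · intro hv; exact (hs1 v hv).1.ne.symm
    · intro h; by_contra hv; exact h (hs2 v hv)
  · intro v w
    simp only [Equiv.ofBijective_apply]
    constructor
    · intro h
      refine ⟨h.ne, ?_⟩
      rcases le_total (K v w) (K w v) with h1 | h1
      · exact Or.inl (huniq _ _ h h1)
      · exact Or.inr (huniq _ _ h.symm h1)
    · rintro ⟨hne, h | h⟩
      · have hv : v ∈ H.verts := by
          by_contra hv; exact hne ((hs2 v hv).symm.trans h)
        rw [← h]; exact (hs1 v hv).1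
      · have hv : w ∈ H.verts := by
          by_contra hv; exact hne (h.symm.trans (hs2 w hv))
        have := (hs1 w hv).1
        rw [h] at this; exact this.symm

theorem Fib.step {G : SimpleGraph V} {σ σ' : Equiv.Perm V} {H : G.Subgraph}
    (h : Fib σ H) (h' : Fib σ' H) {v : V} (hv : v ∈ H.verts) (e : σ v = σ' v) :
    σ (σ' v) = σ' (σ' v) := by
  have hw : σ' v ∈ H.verts := (h'.mapsTo hv).snd_mem
  have h1 := h.nbr hw
  have h2 := h'.nbr hw
  have e1 : σ.symm (σ' v) = v := by rw [← e]; simp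
  rw [h1, e1, Equiv.symm_apply_apply, Set.pair_comm, Set.pair_comm (σ' (σ' v))] at h2
  exact pair_unique h2

theorem Fib.propagate [Finite V] {G : SimpleGraph V} {σ σ' : Equiv.Perm V} {H : G.Subgraph}
    (h : Fib σ H) (h' : Fib σ' H) {v w : V} (hv : v ∈ H.verts) (e : σ v = σ' v)
    (hs : σ'.SameCycle v w) : σ w = σ' w := by
  obtain ⟨n, rfl⟩ := hs.exists_nat_pow_eq
  suffices ∀ n : ℕ, (σ' ^ n) v ∈ H.verts ∧ σ ((σ' ^ n) v) = σ' ((σ' ^ n) v) from (this n).2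
  intro n
  induction n with
  | zero => exact ⟨hv, e⟩
  | succ n ih =>
    rw [pow_succ', Equiv.Perm.mul_apply]
    exact ⟨(h'.mapsTo ih.1).snd_mem, h.step h' ih.1 ih.2⟩

theorem Fib.adj_same {G : SimpleGraph V} {σ : Equiv.Perm V} {H : G.Subgraph}
    (h : Fib σ H) {v w : V} (hvw : H.Adj v w) : σ.SameCycle v w := by
  rcases ((h.2 _ _).1 hvw).2 with h1 | h1
  · rw [← h1]; exact Equiv.Perm.sameCycle_apply_right.2 (Equiv.Perm.SameCycle.refl _ _)
  · rw [← h1]; exact Equiv.Perm.sameCycle_apply_left.2 (Equiv.Perm.SameCycle.refl _ _)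

theorem Fib.comp_iff [Finite V] {G : SimpleGraph V} {σ : Equiv.Perm V} {H : G.Subgraph}
    (h : Fib σ H) (v w : H.verts) :
    H.coe.connectedComponentMk v = H.coe.connectedComponentMk w ↔ σ.SameCycle (v : V) w := by
  rw [SimpleGraph.ConnectedComponent.eq]
  constructor
  · rintro ⟨p⟩
    induction p with
    | nil => exact Equiv.Perm.SameCycle.refl _ _
    | cons hadj p ih => exact (h.adj_same hadj).trans ih
  · intro hs
    obtain ⟨n, hn⟩ := hs.exists_nat_pow_eq
    suffices ∀ n : ℕ, ∃ hm : (σ ^ n) (v : V) ∈ H.verts, H.coe.Reachable v ⟨_, hm⟩ by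
      obtain ⟨hm, hr⟩ := this n
      have : (⟨_, hm⟩ : H.verts) = w := Subtype.ext hn
      rwa [this] at hr
    intro n
    induction n with
    | zero => exact ⟨v.2, SimpleGraph.Reachable.refl _⟩
    | succ n ih =>
      obtain ⟨hm, hr⟩ := ih
      have ha := h.mapsTo hm
      have e : (σ ^ (n+1)) (v : V) = σ ((σ ^ n) (v : V)) := by
        rw [pow_succ', Equiv.Perm.mul_apply]
      rw [e]
      refine ⟨ha.snd_mem, hr.trans ?_⟩
      apply SimpleGraph.Adj.reachable
      exact ha

theorem Fib.numComp_eq [Fintype V] [DecidableEq V] {G : SimpleGraph V} {σ : Equiv.Perm V}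
    {H : G.Subgraph} (h : Fib σ H) : numComp H = Multiset.card σ.cycleType := by
  have hms : ∀ v : H.verts, (v : V) ∈ σ.support := fun v =>
    Equiv.Perm.mem_support.2 ((h.1 v).1 v.2)
  let f : H.coe.ConnectedComponent → σ.cycleFactorsFinset :=
    Quot.lift (fun v => ⟨σ.cycleOf v, Equiv.Perm.cycleOf_mem_cycleFactorsFinset_iff.2 (hms v)⟩)
      (fun v w hr => Subtype.ext (Equiv.Perm.SameCycle.cycleOf_eq
        ((h.comp_iff v w).1 (SimpleGraph.ConnectedComponent.eq.2 hr))))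
  have hf : Function.Bijective f := by
    constructor
    · intro K L
      induction K using SimpleGraph.ConnectedComponent.ind with | _ v
      induction L using SimpleGraph.ConnectedComponent.ind with | _ w
      intro e
      rw [h.comp_iff]
      exact (Equiv.Perm.sameCycle_iff_cycleOf_eq_of_mem_support (hms v) (hms w)).2
        (congrArg Subtype.val e)
    · rintro ⟨c, hc⟩
      have hc' := Equiv.Perm.mem_cycleFactorsFinset_iff.1 hc
      obtain ⟨v, hv⟩ := hc'.1.nonempty_support
      have hv' := Equiv.Perm.mem_cycleFactorsFinset_support_le hc hv
      refine ⟨H.coe.connectedComponentMk ⟨v, (h.1 v).2 (Equiv.Perm.mem_support.1 hv')⟩, ?_⟩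
      apply Subtype.ext
      exact (Equiv.Perm.cycle_is_cycleOf hv hc).symm
  rw [numComp, Nat.card_eq_of_bijective f hf, Equiv.Perm.cycleType_def]
  simp

theorem Fib.ncard_verts [Fintype V] [DecidableEq V] {G : SimpleGraph V} {σ : Equiv.Perm V}
    {H : G.Subgraph} (h : Fib σ H) : H.verts.ncard = σ.support.card := by
  rw [← Set.ncard_coe_finset]
  congr 1
  ext v
  simp [h.1 v]

/-- Flip an orientation outside an invariant set. -/
theorem Fib.flip [Finite V] {G : SimpleGraph V} {σ : Equiv.Perm V}
    {H : G.Subgraph} (h : Fib σ H) (S : Set V)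
    (hS : ∀ v w, H.Adj v w → (v ∈ S ↔ w ∈ S)) :
    ∃ σ' : Equiv.Perm V, Fib σ' H ∧ (∀ v ∈ S, σ' v = σ v) ∧ ∀ v ∉ S, σ' v = σ.symm v := by
  classical
  have hS1 : ∀ v, σ v ∈ S ↔ v ∈ S := by
    intro v
    by_cases hv : v ∈ H.verts
    · exact (hS _ _ (h.mapsTo hv)).symm
    · rw [h.1, not_not] at hv
      rw [hv]
  have hS2 : ∀ v, σ.symm v ∈ S ↔ v ∈ S := by
    intro v
    rw [← hS1, Equiv.apply_symm_apply]
  let s : V → V := fun v => if v ∈ S then σ v else σ.symm v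
  have hs1 : ∀ v ∈ S, s v = σ v := fun v hv => if_pos hv
  have hs2 : ∀ v ∉ S, s v = σ.symm v := fun v hv => if_neg hv
  have hsS : ∀ v, s v ∈ S ↔ v ∈ S := by
    intro v
    by_cases hv : v ∈ S
    · rw [hs1 v hv, hS1]
    · rw [hs2 v hv, hS2]
  have hinj : Function.Injective s := by
    intro v w e
    by_cases hv : v ∈ S
    · have hw : w ∈ S := by rw [← hsS, ← e, hsS]; exact hv
      rw [hs1 v hv, hs1 w hw] at e
      exact σ.injective e
    · have hw : w ∉ S := by rw [← hsS, ← e, hsS]; exact hv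
      rw [hs2 v hv, hs2 w hw] at e
      exact σ.symm.injective e
  refine ⟨Equiv.ofBijective s (Finite.injective_iff_bijective.1 hinj), ⟨?_, ?_⟩, hs1, hs2⟩
  · intro v
    rw [h.1, Equiv.ofBijective_apply]
    by_cases hv : v ∈ S
    · rw [hs1 v hv]
    · rw [hs2 v hv, Ne, Ne, Equiv.symm_apply_eq, eq_comm]
  · intro v w
    rw [h.2]
    simp only [Equiv.ofBijective_apply]
    refine and_congr_right fun hne => ?_
    by_cases hv : v ∈ S <;> by_cases hw : w ∈ S
    · rw [hs1 v hv, hs1 w hw]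
    · rw [hs1 v hv, hs2 w hw]
      have := hS1 v
      have := hS2 w
      have := hS1 w
      constructor <;> rintro (rfl | e) <;> grind
    · rw [hs2 v hv, hs1 w hw]
      have := hS1 v
      have := hS2 v
      have := hS1 w
      constructor <;> rintro (e | rfl) <;> grind
    · rw [hs2 v hv, hs2 w hw, Equiv.symm_apply_eq, Equiv.symm_apply_eq, or_comm, eq_comm,
        @eq_comm _ w]

theorem card_fib [Finite V] {G : SimpleGraph V} {H : G.Subgraph}
    (he : IsElementary H) : Nat.card {σ : Equiv.Perm V // Fib σ H} = 2 ^ numCycComp H := by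
  classical
  obtain ⟨σ₀, h₀⟩ := exists_fib he
  let C := {K : H.coe.ConnectedComponent |
    ∀ v : H.verts, H.coe.connectedComponentMk v = K → subDeg H ↑v = 2}
  let f : {σ : Equiv.Perm V // Fib σ H} → Set C := fun σ =>
    {K | ∃ v : H.verts, H.coe.connectedComponentMk v = K.1 ∧ σ.1 v = σ₀ v}
  have hdeg : ∀ v w : H.verts, H.coe.connectedComponentMk w = H.coe.connectedComponentMk v →
      subDeg H v = subDeg H w := by
    intro v w e
    obtain ⟨p⟩ := SimpleGraph.ConnectedComponent.eq.1 e
    induction p with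
    | nil => rfl
    | cons hadj p ih =>
      exact (ih (SimpleGraph.ConnectedComponent.eq.2 ⟨p⟩)).trans (elem_deg he hadj).symm
  have hC : ∀ v : H.verts, subDeg H v = 2 → H.coe.connectedComponentMk v ∈ C := by
    intro v hv w hw
    rw [← hdeg v w hw, hv]
  have hfm : ∀ (σ : {σ : Equiv.Perm V // Fib σ H}) (v : H.verts) (hv : subDeg H v = 2),
      (⟨_, hC v hv⟩ : C) ∈ f σ ↔ σ.1 v = σ₀ v := by
    intro σ v hv
    constructor
    · rintro ⟨w, hw, e⟩
      exact σ.2.propagate h₀ w.2 e ((h₀.comp_iff _ _).1 hw)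
    · intro e
      exact ⟨v, rfl, e⟩
  have hf : Function.Bijective f := by
    constructor
    · intro σ σ' e
      apply Subtype.ext
      apply Equiv.ext
      intro v
      by_cases hv : v ∈ H.verts
      · have m1 : H.Adj v (σ.1 v) := σ.2.mapsTo hv
        have m2 : H.Adj v (σ'.1 v) := σ'.2.mapsTo hv
        rcases he.1 v hv with hd | hd
        · obtain ⟨a, ha⟩ := Set.ncard_eq_one.1 hd
          have m1' : σ.1 v ∈ H.neighborSet v := m1
          have m2' : σ'.1 v ∈ H.neighborSet v := m2
          rw [ha] at m1' m2'
          exact m1'.trans m2'.symm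
        · have k1 := hfm σ ⟨v, hv⟩ hd
          have k2 := hfm σ' ⟨v, hv⟩ hd
          rw [e, k2] at k1
          have m1' : σ.1 v ∈ H.neighborSet v := m1
          have m2' : σ'.1 v ∈ H.neighborSet v := m2
          rw [h₀.nbr hv] at m1' m2'
          simp only [Set.mem_insert_iff, Set.mem_singleton_iff] at m1' m2'
          simp only at k1
          grind
      · have h1 := σ.2.1 v
        have h2 := σ'.2.1 v
        simp only [hv, false_iff, not_not] at h1 h2
        rw [h1, h2]
    · intro T
      let S : Set V := {v | ∃ hv : v ∈ H.verts, ∃ K ∈ T, H.coe.connectedComponentMk ⟨v, hv⟩ = K.1}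
      have hS : ∀ v w, H.Adj v w → (v ∈ S ↔ w ∈ S) := by
        intro v w hvw
        have e : H.coe.connectedComponentMk ⟨v, hvw.fst_mem⟩
            = H.coe.connectedComponentMk ⟨w, hvw.snd_mem⟩ :=
          (h₀.comp_iff _ _).2 (h₀.adj_same hvw)
        constructor
        · rintro ⟨hv, K, hK, e'⟩
          exact ⟨hvw.snd_mem, K, hK, e.symm.trans e'⟩
        · rintro ⟨hv, K, hK, e'⟩
          exact ⟨hvw.fst_mem, K, hK, e.trans e'⟩
      obtain ⟨σ, hσ, hs1, hs2⟩ := h₀.flip S hS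
      refine ⟨⟨σ, hσ⟩, ?_⟩
      ext ⟨K, hK⟩
      induction K using SimpleGraph.ConnectedComponent.ind with | _ v
      have hd := hK v rfl
      rw [hfm ⟨σ, hσ⟩ v hd]
      show σ v = σ₀ v ↔ _
      have hvS : (v : V) ∈ S ↔ (⟨_, hK⟩ : C) ∈ T := by
        constructor
        · rintro ⟨hv, K, hK, e'⟩
          have : (⟨_, hC v hd⟩ : C) = K := Subtype.ext e'
          rw [this]; exact hK
        · intro h
          exact ⟨v.2, _, h, rfl⟩
      rw [← hvS]
      constructor
      · intro e
        by_contra hn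
        rw [hs2 _ hn] at e
        have := h₀.deg_one v.2 e.symm
        omega
      · exact hs1 _
  rw [Nat.card_eq_of_bijective f hf]
  have := Fintype.ofFinite C
  rw [Nat.card_eq_fintype_card, Fintype.card_set, numCycComp, Nat.card_eq_fintype_card]

theorem exists_fib_iff {G : SimpleGraph V} (σ : Equiv.Perm V)
    (h : ∀ v, σ v ≠ v → G.Adj v (σ v)) : ∃ H₀ : G.Subgraph, ∀ H, Fib σ H ↔ H = H₀ := by
  let H₀ : G.Subgraph :=
    { verts := {v | σ v ≠ v}
      Adj := fun v w => v ≠ w ∧ (σ v = w ∨ σ w = v)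
      adj_sub := by
        rintro v w ⟨hne, rfl | rfl⟩
        · exact h v hne.symm
        · exact (h w hne).symm
      edge_vert := by
        rintro v w ⟨hne, h1 | h1⟩
        · show σ v ≠ v
          rw [h1]; exact hne.symm
        · show σ v ≠ v
          intro h2
          exact hne (σ.injective (h2.trans h1.symm))
      symm := ⟨by
        rintro v w ⟨hne, h1⟩
        exact ⟨hne.symm, h1.symm⟩⟩ }
  refine ⟨H₀, fun H => ⟨fun hF => ?_, ?_⟩⟩
  · apply SimpleGraph.Subgraph.ext
    · ext v; exact hF.1 v
    · ext v w; exact hF.2 v w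
  · rintro rfl
    exact ⟨fun _ => Iff.rfl, fun _ _ => Iff.rfl⟩

theorem term_eq [Fintype V] [DecidableEq V] (G : SimpleGraph V) [DecidableRel G.Adj]
    (x : ℂ) (σ : Equiv.Perm V) (h : ∀ v, σ v ≠ v → G.Adj v (σ v)) :
    ((Equiv.Perm.sign σ : ℤ) : ℂ) * ∏ i, (x • (1 : Matrix V V ℂ) - G.adjMatrix ℂ) (σ i) i =
      (-1) ^ Multiset.card σ.cycleType * x ^ (Fintype.card V - σ.support.card) := by
  have h1 : ∏ i, (x • (1 : Matrix V V ℂ) - G.adjMatrix ℂ) (σ i) i =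
      ∏ i, if i ∈ σ.support then (-1 : ℂ) else x := by
    refine Finset.prod_congr rfl fun i _ => ?_
    by_cases hi : σ i = i
    · simp [hi]
    · simp [hi, Matrix.one_apply, (h i hi).symm]
  have h2 : Finset.univ.filter (fun i => i ∉ σ.support) = σ.supportᶜ := by ext; simp
  rw [h1, Finset.prod_ite, Finset.prod_const, Finset.prod_const, h2, Finset.card_compl,
    Equiv.Perm.sign_of_cycleType, Equiv.Perm.sum_cycleType]
  rw [Finset.filter_mem_eq_inter, Finset.univ_inter]
  push_cast
  rw [pow_add]
  have : ((-1 : ℂ) ^ σ.support.card) * (-1) ^ σ.support.card = 1 := by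
    rw [← mul_pow]; simp
  linear_combination ((-1 : ℂ) ^ Multiset.card σ.cycleType * x ^ (Fintype.card V - σ.support.card)) * this

theorem sachs_expansion [Fintype V] [DecidableEq V] (G : SimpleGraph V) [DecidableRel G.Adj]
    (x : ℂ) :
    charFun G x = ∑ᶠ (H : G.Subgraph) (_ : IsElementary H),
      (-1 : ℂ) ^ numComp H * 2 ^ numCycComp H * x ^ (Fintype.card V - H.verts.ncard) := by
  classical
  have := Fintype.ofFinite G.Subgraph
  have hR : ∀ H : G.Subgraph, (∑ᶠ (_ : IsElementary H),
      (-1 : ℂ) ^ numComp H * 2 ^ numCycComp H * x ^ (Fintype.card V - H.verts.ncard)) =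
      ∑ σ : Equiv.Perm V, if Fib σ H then
        (-1 : ℂ) ^ numComp H * x ^ (Fintype.card V - H.verts.ncard) else 0 := by
    intro H
    by_cases he : IsElementary H
    · simp only [he, finsum_true]
      have hc := card_fib he
      rw [Nat.card_eq_fintype_card, Fintype.card_subtype] at hc
      rw [Finset.sum_ite, Finset.sum_const, hc]
      simp
      ring
    · simp only [he, finsum_false]
      symm
      refine Finset.sum_eq_zero fun σ _ => if_neg fun h => he h.isElementary
  rw [finsum_congr hR, finsum_eq_sum_of_fintype, Finset.sum_comm, charFun, Matrix.det_apply']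
  refine Finset.sum_congr rfl fun σ _ => ?_
  by_cases h : ∀ v, σ v ≠ v → G.Adj v (σ v)
  · obtain ⟨H₀, hH⟩ := exists_fib_iff σ h
    have hF := (hH H₀).2 rfl
    rw [term_eq G x σ h]
    simp only [hH, Finset.sum_ite_eq', Finset.mem_univ, if_true]
    rw [hF.numComp_eq, hF.ncard_verts]
  · rw [Finset.sum_eq_zero (s := (Finset.univ : Finset G.Subgraph))]
    · push Not at h
      obtain ⟨v, hv, hn⟩ := h
      rw [Finset.prod_eq_zero (Finset.mem_univ v), mul_zero]
      have hn' : ¬ G.Adj (σ v) v := fun h => hn h.symm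
      simp [Matrix.one_apply, hv, hn']
    · intro H _
      refine if_neg fun hF => h fun v hv => ?_
      exact (hF.mapsTo ((hF.1 v).2 hv)).adj_sub
end

section
/- Let G be a unicyclic graph of order n whose unique cycle has odd length k, with adjacency eigenvalues λ₁,…,λₙ, and let Θ_G(t) = ∑ᵢ arctan(λᵢ/t) for t > 0. Let F = G − V(C) and M_G, M_F as above. Then Θ_G(t) = arctan(2M_F(t)/M_G(t)) if k ≡ 1 (mod 4), and Θ_G(t) = −arctan(2M_F(t)/M_G(t)) if k ≡ 3 (mod 4). Consequently Θ_G(t) > 0 for all t > 0 when k ≡ 1 (mod 4), and Θ_G(t) < 0 for all t > 0 when k ≡ 3 (mod 4). -/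
variable {V : Type*}

section
open Equiv
theorem aux_invol_sign [Fintype V] [DecidableEq V] (σ : Perm V) (h : σ * σ = 1) :
    Even σ.support.card ∧ Perm.sign σ = (-1) ^ (σ.support.card / 2) := by
  have hall : ∀ m ∈ σ.cycleType, m = 2 := by
    intro m hm
    have h1 := Perm.dvd_of_mem_cycleType hm
    have h2 : orderOf σ ∣ 2 := orderOf_dvd_of_pow_eq_one (by rw [pow_two, h])
    have h3 := Nat.le_of_dvd (by norm_num) (h1.trans h2)
    have h4 := Perm.two_le_of_mem_cycleType hm
    omega
  have hrep := Multiset.eq_replicate_card.2 hall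
  have hs : σ.support.card = 2 * σ.cycleType.card := by
    rw [← Perm.sum_cycleType, hrep]; simp [mul_comm]
  refine ⟨by rw [hs]; simp, ?_⟩
  rw [Perm.sign_of_cycleType, Perm.sum_cycleType, hs, Nat.mul_div_cancel_left _ (by norm_num),
    pow_add, pow_mul]
  simp

theorem aux_edges_card [Fintype V] [DecidableEq V] (σ : Perm V) (h : ∀ i, σ (σ i) = i) :
    σ.support.card = 2 * (σ.support.image (fun i => s(i, σ i))).card := by
  rw [Finset.card_eq_sum_card_image (fun i => s(i, σ i)) σ.support, mul_comm, ← smul_eq_mul,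
    ← Finset.sum_const]
  apply Finset.sum_congr rfl
  intro e he
  obtain ⟨i, hi, rfl⟩ := Finset.mem_image.1 he
  rw [Finset.card_eq_two]
  refine ⟨i, σ i, (Perm.mem_support.1 hi).symm, ?_⟩
  ext a
  simp only [Finset.mem_filter, Finset.mem_insert, Finset.mem_singleton, Sym2.eq_iff]
  constructor
  · rintro ⟨_, ⟨h1, h2⟩ | ⟨h1, h2⟩⟩ <;> simp [h1]
  · rintro (rfl | rfl)
    · simp [hi]
    · refine ⟨Perm.apply_mem_support.2 hi, ?_⟩
      simp [h]

theorem aux_mcount [Fintype V] [DecidableEq V] (H : SimpleGraph V) [DecidableRel H.Adj] (j : ℕ) :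
    mcount H j = (Finset.univ.filter (fun σ : Perm V =>
      ((∀ i, σ (σ i) = i) ∧ ∀ i, σ i ≠ i → H.Adj i (σ i)) ∧ σ.support.card / 2 = j)).card := by
  rw [mcount, ← Set.ncard_coe_finset]
  symm
  refine Set.ncard_congr (fun σ _ => σ.support.image (fun i => s(i, σ i))) ?_ ?_ ?_
  · intro σ hσ
    simp only [Finset.coe_filter, Finset.mem_univ, true_and, Set.mem_ofPred_eq] at hσ
    obtain ⟨⟨h1, h2⟩, h3⟩ := hσ
    refine ⟨?_, ?_, ?_⟩
    · intro e he
      obtain ⟨i, hi, rfl⟩ := Finset.mem_image.1 he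
      exact h2 i (Perm.mem_support.1 hi)
    · rw [aux_edges_card σ h1] at h3
      omega
    · intro e he f hf hne u hu
      obtain ⟨i, hi, rfl⟩ := Finset.mem_image.1 he
      obtain ⟨i', hi', rfl⟩ := Finset.mem_image.1 hf
      have key : ∀ i, u ∈ s(i, σ i) → s(i, σ i) = s(u, σ u) := by
        intro i hu
        rcases Sym2.mem_iff.1 hu with rfl | rfl
        · rfl
        · rw [h1, Sym2.eq_swap]
      exact hne ((key i hu.1).trans (key i' hu.2).symm)
  · intro σ τ hσ hτ he
    simp only [Finset.coe_filter, Finset.mem_univ, true_and, Set.mem_ofPred_eq] at hσ hτ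
    have key : ∀ σ τ : Perm V, (∀ i, τ (τ i) = i) →
        σ.support.image (fun i => s(i, σ i)) = τ.support.image (fun i => s(i, τ i)) →
        ∀ i, σ i ≠ i → τ i = σ i := by
      intro σ τ ht he i hi
      have : s(i, σ i) ∈ τ.support.image (fun i => s(i, τ i)) := by
        rw [← he]; exact Finset.mem_image_of_mem (fun i => s(i, σ i)) (Perm.mem_support.2 hi)
      obtain ⟨a, -, ha⟩ := Finset.mem_image.1 this
      rcases Sym2.eq_iff.1 ha with ⟨h1, h2⟩ | ⟨h1, h2⟩
      · rw [← h1, h2, h1]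
      · exact (congrArg τ h2).symm.trans ((ht a).trans h1)
    ext i
    by_cases h1 : σ i = i
    · by_cases h2 : τ i = i
      · rw [h1, h2]
      · exact key τ σ hσ.1.1 he.symm i h2
    · exact (key σ τ hτ.1.1 he i h1).symm
  · rintro M ⟨hM1, hM2, hM3⟩
    have hex : ∀ i, ∃ a, (s(i, a) ∈ M) ∨ (a = i ∧ ∀ b, s(i, b) ∉ M) := by
      intro i
      by_cases h : ∃ a, s(i, a) ∈ M
      · exact ⟨h.choose, Or.inl h.choose_spec⟩
      · push Not at h
        exact ⟨i, Or.inr ⟨rfl, h⟩⟩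
    choose g hg using hex
    have huniq : ∀ i a b, s(i, a) ∈ M → s(i, b) ∈ M → a = b := by
      intro i a b ha hb
      by_contra hne
      exact hM3 _ ha _ hb (fun h => hne (Sym2.congr_right.1 h)) i (by simp)
    have hmem : ∀ i a, s(i, a) ∈ M → g i = a := by
      intro i a ha
      rcases hg i with h | h
      · exact huniq _ _ _ h ha
      · exact absurd ha (h.2 a)
    have hinv : Function.Involutive g := by
      intro i
      rcases hg i with h | h
      · exact hmem _ _ (by rwa [Sym2.eq_swap])
      · rw [h.1, h.1]
    have hgM : ∀ i, g i ≠ i → s(i, g i) ∈ M := by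
      intro i hi
      rcases hg i with h | h
      · exact h
      · exact absurd h.1 hi
    have himg : (hinv.toPerm g).support.image (fun i => s(i, (hinv.toPerm g) i)) = M := by
      ext e
      simp only [Finset.mem_image, Perm.mem_support, Function.Involutive.coe_toPerm]
      constructor
      · rintro ⟨i, hi, rfl⟩
        exact hgM i hi
      · intro he
        induction e with
        | _ a b =>
        have := hmem a b he
        refine ⟨a, ?_, by rw [this]⟩
        rw [this]
        exact (SimpleGraph.Adj.ne (hM1 _ he)).symm
    refine ⟨hinv.toPerm g, ?_, himg⟩
    simp only [Finset.coe_filter, Finset.mem_univ, true_and, Set.mem_ofPred_eq]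
    refine ⟨⟨?_, ?_⟩, ?_⟩
    · exact hinv
    · intro i hi
      exact hM1 _ (hgM i hi)
    · rw [aux_edges_card _ (by exact hinv), himg, hM2]; omega

theorem aux_match [Fintype V] [DecidableEq V] (H : SimpleGraph V) [DecidableRel H.Adj] (x : ℂ) :
    matchPolyFun H x = ∑ σ : Perm V with (∀ i, σ (σ i) = i),
      ((Perm.sign σ : ℤ) : ℂ) * ∏ i, (x • (1 : Matrix V V ℂ) - H.adjMatrix ℂ) (σ i) i := by
  have h0 : ∀ σ : Perm V, σ ∈ Finset.univ.filter (fun σ : Perm V => ∀ i, σ (σ i) = i) →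
      ((Perm.sign σ : ℤ) : ℂ) * ∏ i, (x • (1 : Matrix V V ℂ) - H.adjMatrix ℂ) (σ i) i ≠ 0 →
      ∀ i, σ i ≠ i → H.Adj i (σ i) := by
    intro σ _ hne i hi
    by_contra hadj
    apply hne
    rw [Finset.prod_eq_zero (Finset.mem_univ i), mul_zero]
    simp [hi, SimpleGraph.adj_comm, hadj]
  rw [← Finset.sum_filter_of_ne h0, Finset.filter_filter]
  have h1 : ∀ σ ∈ Finset.univ.filter (fun σ : Perm V =>
      (∀ i, σ (σ i) = i) ∧ ∀ i, σ i ≠ i → H.Adj i (σ i)),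
      ((Perm.sign σ : ℤ) : ℂ) * ∏ i, (x • (1 : Matrix V V ℂ) - H.adjMatrix ℂ) (σ i) i =
      (-1) ^ (σ.support.card / 2) * x ^ (Fintype.card V - 2 * (σ.support.card / 2)) := by
    intro σ hσ
    simp only [Finset.mem_filter, Finset.mem_univ, true_and] at hσ
    obtain ⟨he, hs⟩ := aux_invol_sign σ (by ext i; simp [hσ.1])
    rw [hs]
    push_cast
    congr 1
    rw [Nat.mul_div_cancel' he.two_dvd]
    rw [← Finset.prod_mul_prod_compl σ.support]
    have e1 : ∏ i ∈ σ.support, (x • (1 : Matrix V V ℂ) - H.adjMatrix ℂ) (σ i) i = 1 := by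
      rw [Finset.prod_congr rfl (g := fun _ => (-1 : ℂ)), Finset.prod_const, he.neg_one_pow]
      intro i hi
      rw [Perm.mem_support] at hi
      simp [hi, (hσ.2 i hi).symm]
    have e2 : ∏ i ∈ σ.supportᶜ, (x • (1 : Matrix V V ℂ) - H.adjMatrix ℂ) (σ i) i =
        x ^ (Fintype.card V - σ.support.card) := by
      rw [Finset.prod_congr rfl (g := fun _ => x), Finset.prod_const, Finset.card_compl]
      intro i hi
      rw [Finset.mem_compl, Perm.notMem_support] at hi
      simp [hi]
    rw [e1, e2, one_mul]
  rw [Finset.sum_congr rfl h1, matchPolyFun]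
  rw [← Finset.sum_fiberwise_of_maps_to (g := fun σ : Perm V => σ.support.card / 2)
    (t := Finset.range (Fintype.card V / 2 + 1))]
  · apply Finset.sum_congr rfl
    intro j _
    rw [Finset.sum_congr rfl (g := fun _ => (-1) ^ j * x ^ (Fintype.card V - 2 * j)),
      Finset.sum_const, Finset.filter_filter, aux_mcount, nsmul_eq_mul]
    · ring
    · intro σ hσ
      rw [Finset.mem_filter] at hσ
      rw [hσ.2]
  · intro σ _
    rw [Finset.mem_range]
    have := Finset.card_le_univ σ.support
    omega

theorem aux_invol_of_acyclic [Fintype V] (H : SimpleGraph V) (hH : H.IsAcyclic) (σ : Perm V) (i : V)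
    (h : ∀ j, σ.SameCycle i j → σ j ≠ j → H.Adj j (σ j)) : σ (σ i) = i := by
  by_contra hne
  have h1 : σ i ≠ i := fun e => hne (by rw [e, e])
  have hb := SimpleGraph.isAcyclic_iff_forall_adj_isBridge.1 hH (h i (Perm.SameCycle.refl _ _) h1)
  rw [SimpleGraph.isBridge_iff] at hb
  have key : ∀ m : ℕ, (H.deleteEdges {s(i, σ i)}).Reachable (σ i) ((σ ^ (m+1)) i) := by
    intro m
    induction m with
    | zero => simp
    | succ m ih =>
      set a := (σ ^ (m+1)) i with ha
      have hs : (σ ^ (m+1+1)) i = σ a := by rw [pow_succ', Perm.mul_apply]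
      rw [hs]
      by_cases hai : a = i
      · rw [hai]
      · refine ih.trans (SimpleGraph.Adj.reachable ?_)
        have hsc : σ.SameCycle i a := ⟨((m+1 : ℕ) : ℤ), by rw [zpow_natCast]⟩
        rw [SimpleGraph.deleteEdges_adj]
        refine ⟨h a hsc ?_, ?_⟩
        · intro e
          exact h1 ((Perm.SameCycle.apply_eq_self_iff hsc).2 e)
        · simp only [Set.mem_singleton_iff, Sym2.eq_iff]
          rintro (⟨e, -⟩ | ⟨e, e'⟩)
          · exact hai e
          · exact hne (by rw [← e, e'])
  have := key (orderOf σ - 1)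
  rw [Nat.sub_add_cancel (orderOf_pos σ), pow_orderOf_eq_one] at this
  exact hb this.symm

theorem aux_delete_acyclic [Fintype V] [DecidableEq V] (G : SimpleGraph V)
    [DecidableRel G.Adj]
    (hconn : G.Connected) (hedge : G.edgeFinset.card = Fintype.card V)
    (v : V) (c : G.Walk v v) (hc : c.IsCycle) (e : Sym2 V) (he : e ∈ c.edges) :
    (G.deleteEdges {e}).IsAcyclic := by
  have heG := c.edges_subset_edgeSet he
  have hb : ¬ G.IsBridge e := fun hb => hb.notMem_edges_of_isCycle hc he
  induction e with
  | _ x y =>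
  have hcn := hconn.connected_delete_edge_of_not_isBridge hb
  refine (SimpleGraph.isTree_iff_connected_and_card.2 ⟨hcn, ?_⟩).2
  rw [Nat.card_eq_fintype_card (α := V), ← hedge, Nat.card_coe_set_eq, SimpleGraph.edgeSet_deleteEdges,
    Set.ncard_sdiff_singleton_add_one heG, ← SimpleGraph.coe_edgeFinset, Set.ncard_coe_finset]

theorem aux_rot [Fintype V] [DecidableEq V] (G : SimpleGraph V)
    (v : V) (c : G.Walk v v) (hc : c.IsCycle) :
    ∃ ρ : Perm V, ρ.IsCycle ∧ ρ.support = c.support.toFinset ∧ c.support.toFinset.card = c.length ∧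
      ∀ a ∈ c.support.toFinset, s(a, ρ a) ∈ c.edges := by
  have hnd := hc.support_nodup
  have hlen : c.support.tail.length = c.length := by simp
  have h3 := hc.three_le_length
  have hset : c.support.tail.toFinset = c.support.toFinset := by
    ext a
    simp only [List.mem_toFinset]
    constructor
    · exact List.mem_of_mem_tail
    · intro h
      rw [SimpleGraph.Walk.mem_support_iff] at h
      rcases h with rfl | h
      · exact SimpleGraph.Walk.end_mem_tail_support (hc.not_nil)
      · exact h
  refine ⟨c.support.tail.formPerm, ?_, ?_, ?_, ?_⟩
  · exact List.isCycle_formPerm hnd (by omega)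
  · rw [List.support_formPerm_of_nodup _ hnd, hset]
    intro x hx
    have := congrArg List.length hx
    simp at this; omega
  · rw [← hset, List.toFinset_card_of_nodup hnd, hlen]
  · intro a ha
    rw [← hset, List.mem_toFinset] at ha
    obtain ⟨j, hj, rfl⟩ := List.getElem_of_mem ha
    rw [List.formPerm_apply_getElem _ hnd]
    have hg : ∀ m (hm : m < c.support.tail.length), c.support.tail[m] = c.getVert (m+1) := by
      intro m hm
      rw [List.getElem_tail, SimpleGraph.Walk.support_getElem_eq_getVert]
    rw [hg, hg]
    rw [hlen] at hj ⊢
    rw [SimpleGraph.Walk.mk_mem_edges_iff_exists]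
    by_cases hjl : j + 1 < c.length
    · rw [Nat.mod_eq_of_lt hjl]
      exact ⟨j+1, hjl, rfl⟩
    · have : j + 1 = c.length := by omega
      rw [this, Nat.mod_self]
      exact ⟨0, by omega, by simp⟩

theorem aux_classify [Fintype V] [DecidableEq V] (G : SimpleGraph V) (ρ : Perm V)
    (hρ : ρ.IsCycle) (hcard : 3 ≤ ρ.support.card)
    (hac : ∀ a ∈ ρ.support, (G.deleteEdges {s(a, ρ a)}).IsAcyclic)
    (σ : Perm V) (hσ : ∀ i, σ i ≠ i → G.Adj i (σ i)) (i : V) (hi : σ (σ i) ≠ i) :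
    ((∀ a ∈ ρ.support, σ a = ρ a) ∨ (∀ a ∈ ρ.support, σ a = ρ⁻¹ a)) ∧ i ∈ ρ.support := by
  have hρ2 : ∀ a ∈ ρ.support, ρ (ρ a) ≠ a := by
    intro a ha h
    rw [Perm.mem_support] at ha
    have h2 : (ρ^2) a = a := by simpa [pow_two] using h
    have h3 : ρ ^ 2 = 1 := (hρ.pow_eq_one_iff' ha).2 h2
    have := orderOf_dvd_of_pow_eq_one h3
    rw [hρ.orderOf] at this
    have := Nat.le_of_dvd (by norm_num) this
    omega
  -- every edge of the cycle is used by the orbit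
  have huse : ∀ a ∈ ρ.support, σ.SameCycle i a ∧ (σ a = ρ a ∨ σ (ρ a) = a) := by
    intro a ha
    by_contra hcon
    apply hi
    apply aux_invol_of_acyclic _ (hac a ha) σ i
    intro j hj hne
    rw [SimpleGraph.deleteEdges_adj]
    refine ⟨hσ j hne, ?_⟩
    simp only [Set.mem_singleton_iff, Sym2.eq_iff]
    rintro (⟨e, e'⟩ | ⟨e, e'⟩)
    · subst e; exact hcon ⟨hj, Or.inl e'⟩
    · subst e
      exact hcon ⟨by rw [← e']; exact Perm.sameCycle_apply_right.2 hj, Or.inr e'⟩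
  have hor : (∀ a ∈ ρ.support, σ a = ρ a) ∨ (∀ a ∈ ρ.support, σ a = ρ⁻¹ a) := by
    by_cases hex : ∃ a ∈ ρ.support, σ a = ρ a
    · left
      obtain ⟨a, ha, hae⟩ := hex
      have hstep : ∀ m : ℕ, σ ((ρ ^ m) a) = ρ ((ρ^m) a) := by
        intro m
        induction m with
        | zero => simpa using hae
        | succ m ih =>
          rw [pow_succ', Perm.mul_apply]
          set b := (ρ^m) a with hb
          have hbs : b ∈ ρ.support := Perm.pow_apply_mem_support.2 ha
          have hbs' : ρ b ∈ ρ.support := Perm.apply_mem_support.2 hbs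
          rcases (huse _ hbs').2 with h | h
          · exact h
          · exfalso
            rw [← ih] at h
            have := σ.injective h
            rw [ih] at this
            exact hρ2 b hbs this
      intro b hb
      obtain ⟨m, hm⟩ := hρ.exists_pow_eq (Perm.mem_support.1 ha) (Perm.mem_support.1 hb)
      rw [← hm]; exact hstep m
    · right
      push Not at hex
      intro a ha
      have ha' : ρ⁻¹ a ∈ ρ.support := by
        rw [← Perm.apply_mem_support]; simpa using ha
      rcases (huse _ ha').2 with h | h
      · exact absurd h (hex _ ha')
      · simpa using h
  refine ⟨hor, ?_⟩
  obtain ⟨a, ha⟩ : ρ.support.Nonempty := Finset.card_pos.1 (by omega)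
  obtain ⟨m, hm⟩ := ((huse a ha).1.symm).exists_nat_pow_eq
  rw [← hm]
  clear hm
  induction m with
  | zero => simpa using ha
  | succ m ih =>
    rw [pow_succ', Perm.mul_apply]
    rcases hor with h | h
    · rw [h _ ih]; exact Perm.apply_mem_support.2 ih
    · rw [h _ ih, ← Perm.apply_mem_support]; simpa using ih

theorem aux_cycle_sum [Fintype V] [DecidableEq V] (G : SimpleGraph V) [DecidableRel G.Adj]
    (x : ℂ) (ρ : Perm V) (hρ : ρ.IsCycle) (hadj : ∀ a ∈ ρ.support, G.Adj a (ρ a))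
    (T : Set V) [DecidablePred (· ∈ T)] (hT : ∀ a, a ∈ T ↔ a ∉ ρ.support) :
    ∑ σ : Perm V with ((∀ a ∈ ρ.support, σ a = ρ a) ∧ ∀ a, a ∉ ρ.support → σ (σ a) = a),
      ((Perm.sign σ : ℤ) : ℂ) * ∏ i, (x • (1 : Matrix V V ℂ) - G.adjMatrix ℂ) (σ i) i =
    - matchPolyFun (G.induce T) x := by
  rw [aux_match, ← Finset.sum_neg_distrib]
  symm
  have hTρ : ∀ a ∈ T, ρ a = a := fun a ha => Perm.notMem_support.1 ((hT a).1 ha)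
  have hval : ∀ (τ : Perm T) (a : V) (ha : a ∈ T),
      (ρ * Perm.ofSubtype τ) a = (τ ⟨a, ha⟩ : V) := by
    intro τ a ha
    rw [Perm.mul_apply, Perm.ofSubtype_apply_of_mem τ ha, hTρ _ (τ ⟨a, ha⟩).2]
  have hval' : ∀ (τ : Perm T) (a : V) (_ : a ∉ T),
      (ρ * Perm.ofSubtype τ) a = ρ a := by
    intro τ a ha
    rw [Perm.mul_apply, Perm.ofSubtype_apply_of_not_mem τ ha]
  refine Finset.sum_bij (fun (τ : Perm T) _ => ρ * Perm.ofSubtype τ) ?_ ?_ ?_ ?_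
  · intro τ hτ
    simp only [Finset.mem_filter, Finset.mem_univ, true_and] at hτ ⊢
    refine ⟨?_, ?_⟩
    · intro a ha
      exact hval' τ a (fun h => (hT a).1 h ha)
    · intro a ha
      have ha' := (hT a).2 ha
      rw [hval τ a ha', hval τ _ (τ ⟨a, ha'⟩).2]
      simp [hτ]
  · intro τ _ τ' _ h
    exact Perm.ofSubtype_injective (mul_left_cancel h)
  · intro σ hσ
    simp only [Finset.mem_filter, Finset.mem_univ, true_and] at hσ
    have : ρ⁻¹ * σ ∈ (Perm.ofSubtype : Perm (Subtype (· ∈ T)) →* Perm V).range := by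
      rw [Perm.mem_range_ofSubtype_iff]
      intro a ha
      rw [Finset.mem_coe, Perm.mem_support] at ha
      change a ∈ T
      rw [hT]
      intro h
      apply ha
      simp [hσ.1 a h]
    obtain ⟨τ, hτ⟩ := this
    have hστ : ρ * Perm.ofSubtype τ = σ := by rw [hτ]; simp
    refine ⟨τ, ?_, hστ⟩
    simp only [Finset.mem_filter, Finset.mem_univ, true_and]
    rintro ⟨a, ha⟩
    have := hσ.2 a ((hT a).1 ha)
    rw [← hστ, hval τ a ha, hval τ _ (τ ⟨a, ha⟩).2] at this
    exact Subtype.ext this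
  · intro τ _
    rw [Perm.sign_mul, Perm.sign_ofSubtype, hρ.sign]
    rw [← Fintype.prod_subtype_mul_prod_subtype (fun a => a ∈ T)]
    have e1 : ∏ i : {a // a ∈ T}, (x • (1 : Matrix V V ℂ) - G.adjMatrix ℂ)
        ((ρ * Perm.ofSubtype τ) i) i =
        ∏ i, (x • (1 : Matrix T T ℂ) - (G.induce T).adjMatrix ℂ) (τ i) i := by
      apply Finset.prod_congr rfl
      rintro ⟨i, hi⟩ _
      rw [hval τ i hi]
      simp [Matrix.one_apply, Subtype.ext_iff, SimpleGraph.adjMatrix_apply]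
    have e2 : ∏ i : {a // ¬ a ∈ T}, (x • (1 : Matrix V V ℂ) - G.adjMatrix ℂ)
        ((ρ * Perm.ofSubtype τ) i) i = (-1) ^ ρ.support.card := by
      rw [Finset.prod_congr rfl (g := fun _ => (-1 : ℂ)), Finset.prod_const]
      · congr 1
        rw [Finset.card_univ, Fintype.card_subtype]
        congr 1
        ext a
        simp [hT]
      · rintro ⟨i, hi⟩ _
        have his : i ∈ ρ.support := by rw [hT] at hi; simpa using hi
        rw [hval' τ i hi]
        have h1 : ρ i ≠ i := Perm.mem_support.1 his
        simp [h1, (hadj i his).symm]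
    rw [e1, e2]
    have e3 : ((-1 : ℂ)) ^ ρ.support.card * (-1) ^ ρ.support.card = 1 := by
      rw [← mul_pow]; simp
    push_cast
    linear_combination (-1) * ((Perm.sign τ : ℤ) : ℂ) * (∏ i, (x • (1 : Matrix T T ℂ) - (G.induce T).adjMatrix ℂ) (τ i) i) * (-e3)

theorem aux_char [Fintype V] [DecidableEq V] (G : SimpleGraph V) [DecidableRel G.Adj]
    (hconn : G.Connected) (hedge : G.edgeFinset.card = Fintype.card V)
    (v : V) (c : G.Walk v v) (hc : c.IsCycle) (T : Set V) [Fintype T]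
    (hT : ∀ a, a ∈ T ↔ a ∉ c.support) (x : ℂ) :
    charFun G x = matchPolyFun G x - 2 * matchPolyFun (G.induce T) x := by
  classical
  obtain ⟨ρ, hρ, hsupp, hcard, hedges⟩ := aux_rot G v c hc
  rw [← hsupp] at hedges hcard
  have h3 := hc.three_le_length
  have hT' : ∀ a, a ∈ T ↔ a ∉ ρ.support := by
    intro a; rw [hsupp, List.mem_toFinset]; exact hT a
  have hadj : ∀ a ∈ ρ.support, G.Adj a (ρ a) := fun a ha => c.adj_of_mem_edges (hedges a ha)
  have hadj' : ∀ a ∈ ρ⁻¹.support, G.Adj a (ρ⁻¹ a) := by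
    intro a ha
    rw [Perm.support_inv] at ha
    have ha' : ρ⁻¹ a ∈ ρ.support := by
      rw [← Perm.apply_mem_support]; simpa using ha
    have := hadj _ ha'
    simpa using this.symm
  have hρ2 : ∀ a ∈ ρ.support, ρ (ρ a) ≠ a := by
    intro a ha h
    rw [Perm.mem_support] at ha
    have h2 : (ρ^2) a = a := by simpa [pow_two] using h
    have h3 : ρ ^ 2 = 1 := (hρ.pow_eq_one_iff' ha).2 h2
    have := orderOf_dvd_of_pow_eq_one h3
    rw [hρ.orderOf] at this
    have := Nat.le_of_dvd (by norm_num) this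
    omega
  have hne : ∀ a ∈ ρ.support, ρ a ≠ ρ⁻¹ a := by
    intro a ha h
    have hi : ρ (ρ a) = a := by rw [h]; simp
    exact hρ2 a ha hi
  obtain ⟨a₀, ha₀⟩ : ρ.support.Nonempty := Finset.card_pos.1 (by omega)
  have key := aux_classify G ρ hρ (by omega)
    (fun a ha => aux_delete_acyclic G hconn hedge v c hc _ (hedges a ha))
  have hinst : (inferInstance : Fintype T) = Subtype.fintype (· ∈ T) := Subsingleton.elim _ _
  have s1 := aux_cycle_sum G x ρ hρ hadj T hT'
  have s2 := aux_cycle_sum G x ρ⁻¹ hρ.inv hadj' T (by rw [Perm.support_inv]; exact hT')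
  rw [Perm.support_inv] at s2
  rw [← hinst] at s1 s2
  rw [charFun, Matrix.det_apply', ← Finset.sum_filter_add_sum_filter_not Finset.univ
    (fun σ : Perm V => ∀ i, σ (σ i) = i), ← aux_match]
  have hsum : ∑ σ : Perm V with ¬ (∀ i, σ (σ i) = i),
      ((Perm.sign σ : ℤ) : ℂ) * ∏ i, (x • (1 : Matrix V V ℂ) - G.adjMatrix ℂ) (σ i) i =
      (-matchPolyFun (G.induce T) x) + (-matchPolyFun (G.induce T) x) := by
    refine Eq.trans ?_ (congrArg₂ (· + ·) s1 s2)
    beta_reduce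
    rw [← Finset.sum_union]
    · symm
      apply Finset.sum_subset
      · intro σ hσ
        simp only [Finset.mem_union, Finset.mem_filter, Finset.mem_univ, true_and] at hσ ⊢
        intro hinv
        rcases hσ with h | h
        · have := hinv a₀
          rw [h.1 a₀ ha₀, h.1 _ (Perm.apply_mem_support.2 ha₀)] at this
          exact hρ2 a₀ ha₀ this
        · have ha' : ρ a₀ ∈ ρ.support := Perm.apply_mem_support.2 ha₀
          have := hinv (ρ (ρ a₀))
          have hinvρ : ∀ b, ρ⁻¹ (ρ b) = b := fun b => by simp
          rw [h.1 _ (Perm.apply_mem_support.2 ha'), hinvρ, h.1 _ ha',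
            hinvρ] at this
          exact hρ2 a₀ ha₀ this.symm
      · intro σ hσ hnot
        simp only [Finset.mem_union, Finset.mem_filter, Finset.mem_univ, true_and] at hσ hnot
        by_contra hnz
        have hsup : ∀ i, σ i ≠ i → G.Adj i (σ i) := by
          intro i hi
          by_contra hadj
          apply hnz
          rw [Finset.prod_eq_zero (Finset.mem_univ i), mul_zero]
          simp [hi, SimpleGraph.adj_comm, hadj]
        have hoff : ∀ a, a ∉ ρ.support → σ (σ a) = a := by
          intro a ha
          by_contra h
          exact ha (key σ hsup a h).2
        push Not at hσ
        obtain ⟨i, hi⟩ := hσ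
        rcases (key σ hsup i hi).1 with h | h
        · exact hnot (Or.inl ⟨h, hoff⟩)
        · exact hnot (Or.inr ⟨h, hoff⟩)
    · rw [Finset.disjoint_left]
      intro σ h1 h2
      simp only [Finset.mem_filter, Finset.mem_univ, true_and] at h1 h2
      exact hne a₀ ha₀ ((h1.1 a₀ ha₀).symm.trans (h2.1 a₀ ha₀))
  rw [hsum]
  ring

theorem aux_M [Fintype V] (H : SimpleGraph V) (t : ℝ) (ht : 0 < t) :
    ∃ r : ℝ, 0 < r ∧ Complex.I ^ (-(Fintype.card V : ℤ)) * matchPolyFun H (Complex.I * t) = r := by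
  refine ⟨∑ j ∈ Finset.range (Fintype.card V / 2 + 1),
    (mcount H j : ℝ) * t ^ (Fintype.card V - 2 * j), ?_, ?_⟩
  · apply Finset.sum_pos'
    · intro j _; positivity
    · refine ⟨0, by simp, ?_⟩
      have : mcount H 0 = 1 := by
        rw [mcount, Set.ncard_eq_one]
        refine ⟨∅, ?_⟩
        ext M
        simp only [Finset.card_eq_zero, Set.mem_ofPred_eq, Set.mem_singleton_iff]
        constructor
        · exact fun h => h.2.1
        · rintro rfl; simp
      rw [this]; positivity
  · rw [matchPolyFun, Finset.mul_sum]
    push_cast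
    apply Finset.sum_congr rfl
    intro j hj
    rw [Finset.mem_range] at hj
    have hle : 2 * j ≤ Fintype.card V := by omega
    obtain ⟨m, hm⟩ := Nat.exists_eq_add_of_le hle
    rw [hm, Nat.add_sub_cancel_left, mul_pow, zpow_neg, zpow_natCast, pow_add, pow_mul,
      Complex.I_sq]
    have h1 : ((-1 : ℂ)) ^ j ≠ 0 := by simp
    have h2 : Complex.I ^ m ≠ 0 := by simp
    field_simp

theorem aux_charFun_prod [Fintype V] [DecidableEq V] (G : SimpleGraph V) [DecidableRel G.Adj] (x : ℂ) :
    charFun G x = ∏ i, (x - ((adjHerm G).eigenvalues i : ℂ)) := by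
  have h1 : charFun G x = (((G.adjMatrix ℝ).map (algebraMap ℝ ℂ)).charpoly).eval x := by
    rw [Matrix.eval_charpoly, charFun]
    congr 1
    ext i j
    simp [Matrix.one_apply, Matrix.diagonal_apply, SimpleGraph.adjMatrix_apply]
    split_ifs <;> simp
  rw [h1, Matrix.charpoly_map, (adjHerm G).charpoly_eq]
  simp [Polynomial.map_prod, Polynomial.eval_prod]

theorem aux_polar (t l : ℝ) (ht : 0 < t) :
    ∃ r : ℝ, 0 < r ∧ (t + Complex.I * l : ℂ) = r * Complex.exp (Real.arctan (l / t) * Complex.I) := by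
  refine ⟨t * Real.sqrt (1 + (l / t) ^ 2), by positivity, ?_⟩
  have hs : Real.sqrt (1 + (l/t)^2) ≠ 0 := by positivity
  rw [Complex.exp_mul_I, ← Complex.ofReal_cos, ← Complex.ofReal_sin, Real.cos_arctan,
    Real.sin_arctan]
  have h1 : t * Real.sqrt (1 + (l / t) ^ 2) * (1 / Real.sqrt (1 + (l / t) ^ 2)) = t := by
    field_simp
  have h2 : t * Real.sqrt (1 + (l / t) ^ 2) * ((l / t) / Real.sqrt (1 + (l / t) ^ 2)) = l := by
    field_simp
  have h1' := congrArg (Complex.ofReal) h1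
  have h2' := congrArg (Complex.ofReal) h2
  rw [Complex.ofReal_mul] at h1' h2'
  linear_combination -h1' - Complex.I * h2'

theorem aux_polar_prod {ι : Type*} (s : Finset ι) (l : ι → ℝ) (t : ℝ) (ht : 0 < t) :
    ∃ r : ℝ, 0 < r ∧ (∏ i ∈ s, (t + Complex.I * l i : ℂ)) =
      r * Complex.exp (((∑ i ∈ s, Real.arctan (l i / t) : ℝ) : ℂ) * Complex.I) := by
  choose r hr hr' using fun i => aux_polar t (l i) ht
  refine ⟨∏ i ∈ s, r i, Finset.prod_pos fun i _ => hr i, ?_⟩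
  rw [Finset.prod_congr rfl (fun i _ => hr' i), Finset.prod_mul_distrib, ← Complex.exp_sum]
  push_cast
  rw [Finset.sum_mul]

theorem aux_theta_bound {ι : Type*} (s : Finset ι) (l : ι → ℝ)
    (h : ∀ t : ℝ, 0 < t → 0 < Real.cos (∑ i ∈ s, Real.arctan (l i / t))) (t : ℝ) (ht : 0 < t) :
    |∑ i ∈ s, Real.arctan (l i / t)| < Real.pi / 2 := by
  by_contra hcon
  push Not at hcon
  set Θ : ℝ → ℝ := fun t => |∑ i ∈ s, Real.arctan (l i / t)| with hΘ
  have hlim : Filter.Tendsto Θ Filter.atTop (nhds 0) := by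
    have : Filter.Tendsto (fun t : ℝ => ∑ i ∈ s, Real.arctan (l i / t)) Filter.atTop
        (nhds (∑ i ∈ s, 0)) := by
      apply tendsto_finsetSum
      intro i _
      have h1 : Filter.Tendsto (fun t : ℝ => l i / t) Filter.atTop (nhds 0) :=
        Filter.Tendsto.div_atTop tendsto_const_nhds Filter.tendsto_id
      simpa [Function.comp_def] using (Real.continuous_arctan.tendsto 0).comp h1
    simpa using this.abs
  have hev := (hlim.eventually (gt_mem_nhds (show (0:ℝ) < Real.pi / 2 by positivity))).and
    (Filter.eventually_ge_atTop t)
  obtain ⟨u, hu, htu⟩ := hev.exists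
  have hcont : ContinuousOn Θ (Set.Icc t u) := by
    apply ContinuousOn.abs
    apply continuousOn_finsetSum
    intro i _
    apply Real.continuous_arctan.comp_continuousOn
    apply ContinuousOn.div continuousOn_const continuousOn_id
    intro y hy
    exact (lt_of_lt_of_le ht hy.1).ne'
  obtain ⟨y, hy, hy'⟩ := intermediate_value_Icc' htu hcont ⟨hu.le, hcon⟩
  have := h y (lt_of_lt_of_le ht hy.1)
  rw [← Real.cos_abs] at this
  change 0 < Real.cos (Θ y) at this
  rw [hy', Real.cos_pi_div_two] at this
  exact lt_irrefl _ this

theorem aux_core [Fintype V] [DecidableEq V] (G : SimpleGraph V) [DecidableRel G.Adj]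
    (hconn : G.Connected) (hedge : G.edgeFinset.card = Fintype.card V)
    (v : V) (c : G.Walk v v) (hc : c.IsCycle) (T : Set V) [Fintype T]
    (hT : ∀ a, a ∈ T ↔ a ∉ c.support) (ε : ℝ)
    (hε : Complex.I ^ (-(c.length : ℤ)) = -(ε * Complex.I)) (t : ℝ) (ht : 0 < t) :
    ∃ R mF mG : ℝ, 0 < R ∧ 0 < mF ∧ 0 < mG ∧
      (Complex.I ^ (-((Fintype.card V : ℤ) - c.length)) *
            matchPolyFun (G.induce T) (Complex.I * t)).re = mF ∧
      (Complex.I ^ (-(Fintype.card V : ℤ)) * matchPolyFun G (Complex.I * t)).re = mG ∧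
      R * Real.cos (∑ i, Real.arctan ((adjHerm G).eigenvalues i / t)) = mG ∧
      R * Real.sin (∑ i, Real.arctan ((adjHerm G).eigenvalues i / t)) = ε * (2 * mF) := by
  obtain ⟨mG, hmG, hG⟩ := aux_M G t ht
  obtain ⟨mF, hmF, hF⟩ := aux_M (G.induce T) t ht
  obtain ⟨R, hR, hprod⟩ := aux_polar_prod Finset.univ (adjHerm G).eigenvalues t ht
  have hcardT : (Fintype.card T : ℤ) = (Fintype.card V : ℤ) - c.length := by
    obtain ⟨ρ, -, -, hcard, -⟩ := aux_rot G v c hc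
    have h1 : Fintype.card T = (c.support.toFinset)ᶜ.card := by
      rw [← Set.toFinset_card]
      congr 1
      ext a
      simp [hT]
    have h2 := Finset.card_add_card_compl c.support.toFinset
    rw [hcard] at h2
    rw [h1]
    omega
  rw [hcardT] at hF
  set Θ := ∑ i, Real.arctan ((adjHerm G).eigenvalues i / t)
  have hchar := aux_char G hconn hedge v c hc T hT (Complex.I * t)
  have hP : Complex.I ^ (-(Fintype.card V : ℤ)) * charFun G (Complex.I * t) =
      ∏ i, (t + Complex.I * (adjHerm G).eigenvalues i : ℂ) := by
    rw [aux_charFun_prod, zpow_neg, zpow_natCast, ← inv_pow, ← Finset.card_univ,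
      ← Finset.prod_const, ← Finset.prod_mul_distrib]
    apply Finset.prod_congr rfl
    intro i _
    rw [Complex.inv_I]
    linear_combination (-(t : ℂ)) * Complex.I_sq
  have hsplit : Complex.I ^ (-(Fintype.card V : ℤ)) =
      Complex.I ^ (-((Fintype.card V : ℤ) - c.length)) * Complex.I ^ (-(c.length : ℤ)) := by
    rw [← zpow_add₀ Complex.I_ne_zero]
    congr 1
    ring
  have hfin : (R : ℂ) * Complex.exp (Θ * Complex.I) = mG + ε * (2 * mF) * Complex.I := by
    rw [← hprod, ← hP, hchar, mul_sub, hG]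
    have : Complex.I ^ (-(Fintype.card V : ℤ)) * (2 * matchPolyFun (G.induce T) (Complex.I * t))
        = 2 * Complex.I ^ (-(c.length : ℤ)) * mF := by
      rw [hsplit, ← hF]; ring
    rw [this, hε]
    ring
  rw [Complex.exp_mul_I, ← Complex.ofReal_cos, ← Complex.ofReal_sin] at hfin
  refine ⟨R, mF, mG, hR, hmF, hmG, by rw [hF, Complex.ofReal_re], by rw [hG, Complex.ofReal_re],
    ?_, ?_⟩
  · have := congrArg Complex.re hfin
    simpa [-Complex.ofReal_cos, -Complex.ofReal_sin] using this
  · have := congrArg Complex.im hfin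
    simpa [-Complex.ofReal_cos, -Complex.ofReal_sin] using this

theorem aux_final [Fintype V] [DecidableEq V] (G : SimpleGraph V) [DecidableRel G.Adj]
    (hconn : G.Connected) (hedge : G.edgeFinset.card = Fintype.card V)
    (v : V) (c : G.Walk v v) (hc : c.IsCycle) (T : Set V) [Fintype T]
    (hT : ∀ a, a ∈ T ↔ a ∉ c.support) (ε : ℝ)
    (hε : Complex.I ^ (-(c.length : ℤ)) = -(ε * Complex.I)) (t : ℝ) (ht : 0 < t) :
    ∃ q : ℝ, 0 < q ∧
      2 * (Complex.I ^ (-((Fintype.card V : ℤ) - c.length)) *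
            matchPolyFun (G.induce T) (Complex.I * t)).re /
      (Complex.I ^ (-(Fintype.card V : ℤ)) * matchPolyFun G (Complex.I * t)).re = q ∧
      ∑ i, Real.arctan ((adjHerm G).eigenvalues i / t) = Real.arctan (ε * q) := by
  have hb := aux_theta_bound Finset.univ (adjHerm G).eigenvalues (by
    intro s hs
    obtain ⟨R, mF, mG, hR, hmF, hmG, h1, h2, h3, h4⟩ :=
      aux_core G hconn hedge v c hc T hT ε hε s hs
    rw [← h3] at hmG
    exact (pos_iff_pos_of_mul_pos hmG).1 hR) t ht
  obtain ⟨R, mF, mG, hR, hmF, hmG, h1, h2, h3, h4⟩ :=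
      aux_core G hconn hedge v c hc T hT ε hε t ht
  rw [h1, h2]
  refine ⟨2 * mF / mG, by positivity, rfl, ?_⟩
  rw [abs_lt] at hb
  rw [← Real.arctan_tan hb.1 hb.2]
  congr 1
  rw [Real.tan_eq_sin_div_cos, ← mul_div_mul_left _ _ hR.ne', h3, h4, mul_div_assoc]

theorem aux_I1 (k : ℕ) (h : k % 4 = 1) :
    Complex.I ^ (-(k : ℤ)) = -(((1 : ℝ) : ℂ) * Complex.I) := by
  rw [zpow_neg, zpow_natCast, Complex.I_pow_eq_pow_mod, h]
  simp

theorem aux_I3 (k : ℕ) (h : k % 4 = 3) :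
    Complex.I ^ (-(k : ℤ)) = -(((-1 : ℝ) : ℂ) * Complex.I) := by
  rw [zpow_neg, zpow_natCast, Complex.I_pow_eq_pow_mod, h, Complex.I_pow_three]
  simp [inv_neg]

end

open Real

/-- For a unicyclic graph `G` of order `n` with odd cycle of length `k`, eigenvalues
`λ i` and `Θ_G(t) = ∑ i, arctan (λ i / t)`, with `M_G(t) = i^(−n) μ_G(it)` and
`M_F(t) = i^(−(n−k)) μ_F(it)` (both real and positive for `t > 0`):
`Θ_G(t) = arctan (2 M_F(t) / M_G(t))` if `k ≡ 1 (mod 4)` and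
`Θ_G(t) = −arctan (2 M_F(t) / M_G(t))` if `k ≡ 3 (mod 4)`; consequently `Θ_G(t) > 0`
for all `t > 0` if `k ≡ 1 (mod 4)`, and `Θ_G(t) < 0` for all `t > 0` if
`k ≡ 3 (mod 4)`. -/
theorem theta_eq_arctan [Fintype V] [DecidableEq V] (G : SimpleGraph V)
    [DecidableRel G.Adj]
    (hconn : G.Connected) (hedge : G.edgeFinset.card = Fintype.card V)
    (v : V) (c : G.Walk v v) (hc : c.IsCycle) (hodd : Odd c.length) :
    (c.length % 4 = 1 → ∀ t : ℝ, 0 < t →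
      ∑ i, arctan ((adjHerm G).eigenvalues i / t) =
        arctan (2 * (Complex.I ^ (-((Fintype.card V : ℤ) - c.length)) *
            matchPolyFun (G.induce ↑(c.support.toFinset)ᶜ) (Complex.I * t)).re /
          (Complex.I ^ (-(Fintype.card V : ℤ)) * matchPolyFun G (Complex.I * t)).re)) ∧
    (c.length % 4 = 3 → ∀ t : ℝ, 0 < t →
      ∑ i, arctan ((adjHerm G).eigenvalues i / t) =
        -arctan (2 * (Complex.I ^ (-((Fintype.card V : ℤ) - c.length)) *
            matchPolyFun (G.induce ↑(c.support.toFinset)ᶜ) (Complex.I * t)).re /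
          (Complex.I ^ (-(Fintype.card V : ℤ)) * matchPolyFun G (Complex.I * t)).re)) ∧
    (c.length % 4 = 1 → ∀ t : ℝ, 0 < t →
      0 < ∑ i, arctan ((adjHerm G).eigenvalues i / t)) ∧
    (c.length % 4 = 3 → ∀ t : ℝ, 0 < t →
      ∑ i, arctan ((adjHerm G).eigenvalues i / t) < 0) := by
  refine ⟨?_, ?_, ?_, ?_⟩
  · intro hk t ht
    obtain ⟨q, hq, h1, h2⟩ := aux_final G hconn hedge v c hc (↑(c.support.toFinset)ᶜ)
      (by simp) 1 (aux_I1 _ hk) t ht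
    rw [h1, h2, one_mul]
  · intro hk t ht
    obtain ⟨q, hq, h1, h2⟩ := aux_final G hconn hedge v c hc (↑(c.support.toFinset)ᶜ)
      (by simp) (-1) (aux_I3 _ hk) t ht
    rw [h1, h2, neg_one_mul, arctan_neg]
  · intro hk t ht
    obtain ⟨q, hq, h1, h2⟩ := aux_final G hconn hedge v c hc (↑(c.support.toFinset)ᶜ)
      (by simp) 1 (aux_I1 _ hk) t ht
    rw [h2, one_mul]
    exact arctan_pos.2 hq
  · intro hk t ht
    obtain ⟨q, hq, h1, h2⟩ := aux_final G hconn hedge v c hc (↑(c.support.toFinset)ᶜ)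
      (by simp) (-1) (aux_I3 _ hk) t ht
    rw [h2, neg_one_mul, arctan_neg]
    exact neg_lt_zero.2 (arctan_pos.2 hq)
end

section
/- Let G be a unicyclic graph of order n whose unique cycle has length k with k ≡ 3 (mod 4). Then s⁺(G) > n > s⁻(G). -/
variable {V : Type*}

open Filter Topology in
theorem arctan_sub_le (x : ℝ) : |Real.arctan x - x| ≤ |x| ^ 3 := by
  have h := (convex_Icc (-|x|) |x|).norm_image_sub_le_of_norm_hasDerivWithin_le
    (f := fun y => Real.arctan y - y) (f' := fun y => 1 / (1 + y ^ 2) - 1) (C := |x| ^ 2)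
    (x := 0) (y := x)
    (fun y _ => ((Real.hasDerivAt_arctan y).sub (hasDerivAt_id y)).hasDerivWithinAt)
    (by
      intro y hy
      have hy' : |y| ≤ |x| := abs_le.2 hy
      have h1 : y ^ 2 ≤ |x| ^ 2 := by rw [← sq_abs y]; gcongr
      have h2 : 1 / (1 + y ^ 2) - 1 = - (y ^ 2 / (1 + y ^ 2)) := by
        have : 1 + y ^ 2 ≠ 0 := by positivity
        field_simp; ring
      rw [h2, norm_neg, Real.norm_of_nonneg (by positivity)]
      refine le_trans (div_le_self (by positivity) (by nlinarith [sq_nonneg y])) h1)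
    (by simp) (by simp [abs_le.1 le_rfl])
  simp only [Real.arctan_zero, sub_zero, Real.norm_eq_abs] at h
  calc _ ≤ _ := h
    _ = _ := by ring

open Filter Topology in
theorem sum_arctan_neg {ι : Type*} [Fintype ι] (l : ι → ℝ)
    (him : ∀ t : ℝ, 0 < t → (∏ i, ((t : ℂ) + l i * Complex.I)).im < 0) (t : ℝ) (ht : 0 < t) :
    ∑ i, Real.arctan (l i / t) < 0 := by
  have hsin : ∀ t : ℝ, 0 < t → Real.sin (∑ i, Real.arctan (l i / t)) < 0 := by
    intro t ht
    have hfac : ∀ i, (t : ℂ) + l i * Complex.I =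
        ((t / Real.cos (Real.arctan (l i / t)) : ℝ) : ℂ) *
          Complex.exp ((Real.arctan (l i / t) : ℝ) * Complex.I) := by
      intro i
      have hc := Real.cos_arctan_pos (l i / t)
      have htan := Real.tan_arctan (l i / t)
      rw [Real.tan_eq_sin_div_cos] at htan
      apply Complex.ext
      · rw [Complex.re_ofReal_mul, Complex.exp_ofReal_mul_I_re]
        simp; field_simp
      · rw [Complex.im_ofReal_mul, Complex.exp_ofReal_mul_I_im]
        simp only [Complex.add_im, Complex.ofReal_im, Complex.mul_im, Complex.ofReal_re,
          Complex.I_im, Complex.I_re]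
        have : Real.sin (Real.arctan (l i / t)) = l i / t * Real.cos (Real.arctan (l i / t)) :=
          (div_eq_iff hc.ne').1 htan
        rw [this]; field_simp; ring
    have h := him t ht
    rw [Finset.prod_congr rfl (fun i _ => hfac i), Finset.prod_mul_distrib, ← Complex.exp_sum,
      ← Finset.sum_mul, ← Complex.ofReal_prod, ← Complex.ofReal_sum, Complex.im_ofReal_mul,
      Complex.exp_ofReal_mul_I_im] at h
    have hp : 0 < ∏ i, t / Real.cos (Real.arctan (l i / t)) :=
      Finset.prod_pos fun i _ => div_pos ht (Real.cos_arctan_pos _)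
    by_contra hcon
    exact absurd h (not_lt.2 (mul_nonneg hp.le (not_lt.1 hcon)))
  have hcont : ContinuousOn (fun t : ℝ => ∑ i, Real.arctan (l i / t)) (Set.Ioi 0) := by
    refine continuousOn_finsetSum _ fun i _ => ?_
    refine Real.continuous_arctan.comp_continuousOn ?_
    exact continuousOn_const.div continuousOn_id fun x hx => (ne_of_gt hx)
  have hlim : Tendsto (fun t : ℝ => ∑ i, Real.arctan (l i / t)) atTop (𝓝 0) := by
    have : Tendsto (fun t : ℝ => ∑ i, Real.arctan (l i / t)) atTop
        (𝓝 (∑ i : ι, Real.arctan 0)) := by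
      refine tendsto_finsetSum _ fun i _ => ?_
      exact (Real.continuous_arctan.tendsto 0).comp (tendsto_const_nhds.div_atTop tendsto_id)
    simpa using this
  by_contra hcon
  push Not at hcon
  have hev := hlim.eventually (Ioo_mem_nhds (show (-Real.pi) < 0 by linarith [Real.pi_pos])
    Real.pi_pos)
  obtain ⟨T, hT1, hT2⟩ := (hev.and (eventually_gt_atTop t)).exists
  have hTneg : ∑ i, Real.arctan (l i / T) < 0 := by
    by_contra hh
    exact absurd (hsin T (ht.trans hT2)) (not_lt.2
      (Real.sin_nonneg_of_nonneg_of_le_pi (not_lt.1 hh) hT1.2.le))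
  have hivt := intermediate_value_Icc' hT2.le
    (hcont.mono (fun x hx => lt_of_lt_of_le ht hx.1))
  obtain ⟨x, hx, hx0⟩ := hivt ⟨hTneg.le, hcon⟩
  have := hsin x (lt_of_lt_of_le ht hx.1)
  simp only at hx0
  rw [hx0] at this
  simp at this

open Filter Topology in
theorem sum_mul_abs_pos {ι : Type*} [Fintype ι] (l : ι → ℝ) (h0 : ∑ i, l i = 0)
    (him : ∀ t : ℝ, 0 < t → (∏ i, ((t : ℂ) + l i * Complex.I)).im < 0) :
    0 < ∑ i, l i * |l i| := by
  have hS := sum_arctan_neg l him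
  set K : ℝ → ℝ := fun T => ∑ i, (T ^ 2 + l i ^ 2) / 2 * Real.arctan (l i / T) with hK
  have hder : ∀ T : ℝ, 0 < T → HasDerivAt K (T * ∑ i, Real.arctan (l i / T)) T := by
    intro T hT
    have h1 : ∀ i, HasDerivAt (fun T : ℝ => (T ^ 2 + l i ^ 2) / 2 * Real.arctan (l i / T))
        (T * Real.arctan (l i / T) - l i / 2) T := by
      intro i
      have ha : HasDerivAt (fun T : ℝ => (T ^ 2 + l i ^ 2) / 2) T T := by
        have := (((hasDerivAt_id T).pow 2).add_const (l i ^ 2)).div_const 2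
        refine this.congr_deriv ?_
        simp
      have hb : HasDerivAt (fun T : ℝ => l i / T) (- l i / T ^ 2) T := by
        have := (hasDerivAt_inv hT.ne').const_mul (l i)
        refine this.congr_deriv ?_
        field_simp
      have := ha.mul hb.arctan
      refine this.congr_deriv ?_
      have : T ^ 2 + l i ^ 2 ≠ 0 := by positivity
      field_simp
      ring
    have h2 := HasDerivAt.fun_sum (u := Finset.univ) (fun i _ => h1 i)
    refine h2.congr_deriv ?_
    rw [Finset.sum_sub_distrib, ← Finset.mul_sum, ← Finset.sum_div, h0]
    simp
  have hanti : StrictAntiOn K (Set.Ioi 0) := by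
    refine strictAntiOn_of_deriv_neg (convex_Ioi 0)
      (fun x hx => (hder x hx).continuousAt.continuousWithinAt) ?_
    intro x hx
    rw [interior_Ioi] at hx
    rw [(hder x hx).deriv]
    exact mul_neg_of_pos_of_neg hx (hS x hx)
  have hinf : Tendsto K atTop (𝓝 0) := by
    have : Tendsto (fun T : ℝ => ∑ i, ((T ^ 2 + l i ^ 2) / 2 * Real.arctan (l i / T)
        - T * l i / 2)) atTop (𝓝 (∑ i : ι, 0)) := by
      refine tendsto_finsetSum _ fun i _ => ?_
      have e1 : Tendsto (fun T : ℝ => T ^ 2 / 2 * (Real.arctan (l i / T) - l i / T)) atTop (𝓝 0) := by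
        refine squeeze_zero_norm' (a := fun T : ℝ => |l i| ^ 3 / 2 / T) ?_
          (tendsto_const_nhds.div_atTop tendsto_id)
        filter_upwards [eventually_gt_atTop 0] with T hT
        have := arctan_sub_le (l i / T)
        rw [abs_div, abs_of_pos hT] at this
        rw [norm_mul, Real.norm_of_nonneg (by positivity), Real.norm_eq_abs]
        calc _ ≤ T ^ 2 / 2 * (|l i| / T) ^ 3 := by gcongr
          _ = _ := by field_simp
      have e2 : Tendsto (fun T : ℝ => l i ^ 2 / 2 * Real.arctan (l i / T)) atTop (𝓝 0) := by
        have := ((Real.continuous_arctan.tendsto 0).comp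
          (tendsto_const_nhds.div_atTop tendsto_id : Tendsto (fun T : ℝ => l i / T) atTop (𝓝 0))).const_mul (l i ^ 2 / 2)
        simpa using this
      have := e1.add e2
      rw [add_zero] at this
      refine this.congr' ?_
      filter_upwards [eventually_gt_atTop 0] with T hT
      field_simp
      ring
    simp only [Finset.sum_const_zero, Finset.sum_sub_distrib, ← Finset.sum_div, ← Finset.mul_sum, h0] at this
    simpa [hK] using this
  have hzero : Tendsto K (𝓝[>] 0) (𝓝 (Real.pi / 4 * ∑ i, l i * |l i|)) := by
    rw [Finset.mul_sum]
    refine tendsto_finsetSum _ fun i _ => ?_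
    have hp : Tendsto (fun T : ℝ => (T ^ 2 + l i ^ 2) / 2) (𝓝[>] 0) (𝓝 (l i ^ 2 / 2)) := by
      have : Continuous (fun T : ℝ => (T ^ 2 + l i ^ 2) / 2) := by fun_prop
      have := (this.tendsto 0).mono_left (nhdsWithin_le_nhds (s := Set.Ioi 0))
      simpa using this
    rcases lt_trichotomy (l i) 0 with h | h | h
    · have ha : Tendsto (fun T : ℝ => Real.arctan (l i / T)) (𝓝[>] 0) (𝓝 (-(Real.pi / 2))) :=
        (Real.tendsto_arctan_atBot.mono_right nhdsWithin_le_nhds).comp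
          (tendsto_inv_nhdsGT_zero.const_mul_atTop_of_neg h)
      convert hp.mul ha using 2
      rw [abs_of_neg h]; ring
    · simp [h]
    · have ha : Tendsto (fun T : ℝ => Real.arctan (l i / T)) (𝓝[>] 0) (𝓝 ((Real.pi / 2))) :=
        (Real.tendsto_arctan_atTop.mono_right nhdsWithin_le_nhds).comp
          (tendsto_inv_nhdsGT_zero.const_mul_atTop h)
      convert hp.mul ha using 2
      rw [abs_of_pos h]; ring
  have hK2 : 0 ≤ K 2 := by
    refine le_of_tendsto hinf ?_
    filter_upwards [eventually_ge_atTop 2] with T hT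
    exact hanti.antitoneOn (by simp) (by simp; linarith) hT
  have hK1 : K 2 < K 1 := hanti (by simp) (by simp) (by norm_num)
  have hK0 : K 1 ≤ Real.pi / 4 * ∑ i, l i * |l i| := by
    refine ge_of_tendsto hzero ?_
    filter_upwards [Ioo_mem_nhdsGT (show (0:ℝ) < 1 by norm_num)] with T hT
    exact hanti.antitoneOn hT.1 (by simp) hT.2.le
  have hpi := Real.pi_pos
  by_contra hcon
  nlinarith [not_lt.1 hcon]

theorem skew_quad {V : Type*} [Fintype V] (S : V → V → ℝ) (hS : ∀ x y, S x y = - S y x)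
    (y : V → ℝ) : ∑ x, y x * ∑ z, S x z * y z = 0 := by
  have h : ∑ x, y x * ∑ z, S x z * y z = - ∑ x, y x * ∑ z, S x z * y z := by
    conv_lhs => simp only [Finset.mul_sum]
    rw [Finset.sum_comm]
    simp only [Finset.mul_sum]
    rw [← Finset.sum_neg_distrib]
    refine Finset.sum_congr rfl fun x _ => ?_
    rw [← Finset.sum_neg_distrib]
    refine Finset.sum_congr rfl fun z _ => ?_
    rw [hS z x]; ring
  linarith

theorem diag_pos {V : Type*} [Fintype V] [DecidableEq V] (S : V → V → ℝ)
    (hS : ∀ x y, S x y = - S y x) (t : ℝ) (ht : 0 < t) (w : V) (y : V → ℝ)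
    (hy : ∀ x, t * y x + ∑ z, S x z * y z = if x = w then 1 else 0) : 0 < y w := by
  have h1 : ∑ x, y x * (t * y x + ∑ z, S x z * y z) = y w := by
    simp [hy]
  simp only [mul_add, Finset.sum_add_distrib] at h1
  rw [skew_quad S hS y, add_zero] at h1
  have h2 : y w ≠ 0 := by
    intro h0
    have hall : ∀ x, y x = 0 := by
      have := (Finset.sum_eq_zero_iff_of_nonneg
        (s := Finset.univ) (f := fun x => y x * (t * y x))
        (fun x _ => by nlinarith [mul_self_nonneg (y x)])).1 (by rw [h1, h0])
      intro x
      have := this x (Finset.mem_univ x)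
      simpa [ht.ne'] using this
    have := hy w
    simp [hall] at this
  refine lt_of_le_of_ne ?_ h2.symm
  rw [← h1]
  exact Finset.sum_nonneg fun x _ => by nlinarith [mul_self_nonneg (y x)]

/-- One step across a bridge. -/
theorem step_pos {V : Type*} [Fintype V] [DecidableEq V] (F : SimpleGraph V)
    (S : V → V → ℝ) (hS : ∀ x y, S x y = - S y x) (hF : ∀ x y, S x y ≠ 0 → F.Adj x y)
    (t : ℝ) (ht : 0 < t) (w : V) (y : V → ℝ)
    (hy : ∀ x, t * y x + ∑ z, S x z * y z = if x = w then 1 else 0)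
    (a b : V) (hb : F.IsBridge s(a, b)) (hab : S a b ≠ 0)
    (hw : (F.deleteEdges {s(a, b)}).Reachable b w) (hyb : y b ≠ 0) :
    0 < - S a b * y a * y b := by
  classical
  rw [SimpleGraph.isBridge_iff] at hb
  set F0 := F.deleteEdges {s(a, b)} with hF0
  set yc : V → ℝ := fun x => if F0.Reachable a x then y x else 0 with hyc
  have haw : ¬ F0.Reachable a w := fun h => hb (h.trans hw.symm)
  have hrow : ∀ x, F0.Reachable a x →
      t * yc x + ∑ z, S x z * yc z = if x = a then - S a b * y b else 0 := by
    intro x hx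
    have hxw : x ≠ w := by rintro rfl; exact haw hx
    have h := hy x
    rw [if_neg hxw] at h
    have h2 : ∀ z, S x z * yc z = S x z * y z - if z = b then (if x = a then S a b * y b else 0) else 0 := by
      intro z
      by_cases hxz : S x z = 0
      · rw [hxz]
        split_ifs with h3 h4
        · subst h3 h4; exact absurd hxz hab
        · simp
        · simp
      by_cases hz : F0.Reachable a z
      · have : z ≠ b := by rintro rfl; exact hb hz
        simp [hyc, hz, this]
      · have hadj := hF x z hxz
        have : ¬ F0.Adj x z := fun h => hz (hx.trans h.reachable)
        have he : s(x, z) = s(a, b) := by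
          by_contra hne
          exact this (by rw [hF0, SimpleGraph.deleteEdges_adj]; exact ⟨hadj, hne⟩)
        rw [Sym2.eq_iff] at he
        rcases he with ⟨rfl, rfl⟩ | ⟨rfl, rfl⟩
        · simp [hyc, hz]
        · exact absurd (SimpleGraph.Reachable.refl _) hz
    simp only [h2, Finset.sum_sub_distrib, Finset.sum_ite_eq', Finset.mem_univ, if_true]
    have : yc x = y x := by simp [hyc, hx]
    rw [this]
    split_ifs <;> linarith
  have hya : yc a = y a := by simp [hyc]
  have h1 : ∑ x, yc x * (t * yc x + ∑ z, S x z * yc z) = - S a b * y a * y b := by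
    have : ∀ x, yc x * (t * yc x + ∑ z, S x z * yc z) =
        if x = a then y a * (- S a b * y b) else 0 := by
      intro x
      by_cases hx : F0.Reachable a x
      · rw [hrow x hx]
        split_ifs with h
        · rw [h, hya]
        · simp
      · have : x ≠ a := by rintro rfl; exact hx (SimpleGraph.Reachable.refl _)
        simp [hyc, hx, this]
    simp only [this, Finset.sum_ite_eq', Finset.mem_univ, if_true]
    ring
  simp only [mul_add, Finset.sum_add_distrib] at h1
  rw [skew_quad S hS yc, add_zero] at h1
  refine lt_of_le_of_ne ?_ ?_
  · rw [← h1]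
    exact Finset.sum_nonneg fun x _ => by nlinarith [mul_self_nonneg (yc x)]
  · intro h0
    rw [← h0] at h1
    have hall : ∀ x, yc x = 0 := by
      have := (Finset.sum_eq_zero_iff_of_nonneg
        (s := Finset.univ) (f := fun x => yc x * (t * yc x))
        (fun x _ => by nlinarith [mul_self_nonneg (yc x)])).1 h1
      intro x
      have := this x (Finset.mem_univ x)
      simpa [ht.ne'] using this
    have := hrow a (SimpleGraph.Reachable.refl _)
    simp [hall, hab, hyb] at this

theorem path_sign {V : Type*} [Fintype V] [DecidableEq V] (F : SimpleGraph V)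
    (hac : F.IsAcyclic) (ε : V → ℝ) (hε : ∀ x, ε x ≠ 0)
    (S : V → V → ℝ) (hS : ∀ x y, S x y = - S y x) (hF : ∀ x y, S x y ≠ 0 → F.Adj x y)
    (hF' : ∀ x y, F.Adj x y → S x y = ε x)
    (t : ℝ) (ht : 0 < t) (w : V) (y : V → ℝ)
    (hy : ∀ x, t * y x + ∑ z, S x z * y z = if x = w then 1 else 0)
    (u : V) (p : F.Walk u w) (hp : p.IsPath) :
    (p.length % 4 = 0 → 0 < y u) ∧ (p.length % 4 = 1 → 0 < - ε u * y u) ∧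
    (p.length % 4 = 2 → y u < 0) ∧ (p.length % 4 = 3 → 0 < ε u * y u) := by
  induction p with
  | nil => simpa using diag_pos S hS t ht _ y hy
  | @cons a b w h p ih =>
    rw [SimpleGraph.Walk.cons_isPath_iff] at hp
    obtain ⟨i0, i1, i2, i3⟩ := ih hy hp.1
    have hyb : y b ≠ 0 := by
      have : p.length % 4 = 0 ∨ p.length % 4 = 1 ∨ p.length % 4 = 2 ∨ p.length % 4 = 3 := by omega
      intro h0
      rw [h0] at i0 i1 i2 i3
      rcases this with h | h | h | h
      · exact absurd (i0 h) (lt_irrefl _)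
      · have := i1 h
        rw [mul_zero] at this
        exact absurd this (lt_irrefl _)
      · exact absurd (i2 h) (lt_irrefl _)
      · have := i3 h
        rw [mul_zero] at this
        exact absurd this (lt_irrefl _)
    have hab := hF' a b h
    have hba := hF' b a h.symm
    have hee : ε b = - ε a := by rw [← hab, ← hba, hS]
    have hst := step_pos F S hS hF t ht w y hy a b
      ((SimpleGraph.isAcyclic_iff_forall_adj_isBridge.1 hac) h) (by rw [hab]; exact hε a) (by
        refine ⟨p.toDeleteEdge s(a, b) ?_⟩
        intro hmem
        exact hp.2 (p.fst_mem_support_of_mem_edges hmem)) hyb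
    rw [hab] at hst
    rw [hee] at i1 i3
    rw [SimpleGraph.Walk.length_cons]
    refine ⟨fun h => ?_, fun h => ?_, fun h => ?_, fun h => ?_⟩
    · have := i3 (by omega)
      by_contra hc
      nlinarith [not_lt.1 hc]
    · have := i0 (by omega)
      by_contra hc
      nlinarith [not_lt.1 hc]
    · have := i1 (by omega)
      by_contra hc
      nlinarith [not_lt.1 hc]
    · have := i2 (by omega)
      by_contra hc
      nlinarith [not_lt.1 hc]

theorem prod_eq_det [Fintype V] [DecidableEq V] (G : SimpleGraph V) [DecidableRel G.Adj] (t : ℝ) :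
    ∏ i, ((t : ℂ) + (adjHerm G).eigenvalues i * Complex.I) =
      Matrix.det (Matrix.of fun x y : V => (if x = y then (t : ℂ) else 0) +
        if G.Adj x y then Complex.I else 0) := by
  have h := (adjHerm G).charpoly_eq
  have h2 := congrArg (fun p => (p.map (Complex.ofRealHom)).eval (t * Complex.I)) h
  simp only [← Matrix.charpoly_map, Matrix.eval_charpoly, Polynomial.map_prod, Polynomial.eval_prod,
    Polynomial.map_sub, Polynomial.map_X, Polynomial.map_C, Polynomial.eval_sub, Polynomial.eval_X,
    Polynomial.eval_C] at h2
  have h3 : ∀ i, ((t : ℂ) + (adjHerm G).eigenvalues i * Complex.I) =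
      (-Complex.I) * (t * Complex.I - ((adjHerm G).eigenvalues i : ℝ)) := by
    intro i
    linear_combination ((t:ℂ)) * Complex.I_mul_I
  simp only [h3]
  rw [Finset.prod_mul_distrib, Finset.prod_const, Finset.card_univ]
  have h4 : ∏ i, ((t : ℂ) * Complex.I - ((adjHerm G).eigenvalues i : ℝ)) = _ := h2.symm
  rw [h4, ← Matrix.det_smul]
  congr 1
  ext x y
  simp only [Matrix.smul_apply, Matrix.sub_apply, Matrix.scalar_apply, Matrix.diagonal_apply,
    Matrix.map_apply, Matrix.of_apply, SimpleGraph.adjMatrix_apply, smul_eq_mul]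
  have : -Complex.I * ((t:ℂ) * Complex.I) = t := by
    linear_combination (-(t:ℂ)) * Complex.I_mul_I
  rw [mul_sub, mul_ite, this]
  split_ifs <;> simp

theorem skew_det_pos [Fintype V] [DecidableEq V] (S : Matrix V V ℝ)
    (hS : ∀ x y, S x y = - S y x) (t : ℝ) (ht : 0 < t) :
    0 < (t • (1 : Matrix V V ℝ) + S).det := by
  have hne : ∀ s : ℝ, (t • (1 : Matrix V V ℝ) + s • S).det ≠ 0 := by
    intro s h0
    obtain ⟨y, hy0, hy⟩ := Matrix.exists_mulVec_eq_zero_iff.2 h0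
    apply hy0
    have hrow : ∀ x, t * y x + ∑ z, (s * S x z) * y z = 0 := by
      intro x
      have := congrFun hy x
      rw [Matrix.add_mulVec, Matrix.smul_mulVec, Matrix.one_mulVec] at this
      simpa [Matrix.mulVec, dotProduct] using this
    have h1 : ∑ x, y x * (t * y x + ∑ z, (s * S x z) * y z) = 0 := by simp [hrow]
    simp only [mul_add, Finset.sum_add_distrib] at h1
    rw [skew_quad (fun x z => s * S x z) (fun x z => by rw [hS x z]; ring) y, add_zero] at h1
    have := (Finset.sum_eq_zero_iff_of_nonneg
        (s := Finset.univ) (f := fun x => y x * (t * y x))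
        (fun x _ => by nlinarith [mul_self_nonneg (y x)])).1 h1
    ext x
    have := this x (Finset.mem_univ x)
    simpa [ht.ne'] using this
  have hcont : Continuous (fun s : ℝ => (t • (1 : Matrix V V ℝ) + s • S).det) := by
    apply Continuous.matrix_det
    fun_prop
  by_contra hcon
  have h0 : (0:ℝ) < (t • (1 : Matrix V V ℝ) + (0:ℝ) • S).det := by
    rw [zero_smul, add_zero, Matrix.det_smul, Matrix.det_one, mul_one]
    positivity
  have := intermediate_value_Icc' (zero_le_one (α := ℝ)) hcont.continuousOn
  obtain ⟨s, -, hs⟩ := this (show (0:ℝ) ∈ _ from ⟨by rw [one_smul]; exact not_lt.1 hcon, h0.le⟩)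
  exact hne s hs

/-- Rank two update of the determinant, imaginary part. -/
theorem det_update_im [Fintype V] [DecidableEq V] (N : Matrix V V ℝ) (hN : N.det ≠ 0) (a b : V) :
    (Matrix.det (Matrix.of fun x y : V => (N x y : ℂ) +
      ((if x = a ∧ y = b then Complex.I else 0) + (if x = b ∧ y = a then Complex.I else 0)))).im
      = N.det * (N⁻¹ a b + N⁻¹ b a) := by
  let U : Matrix V (Fin 2) ℂ := Matrix.of fun x j => if x = ![a, b] j then Complex.I else 0
  let W : Matrix (Fin 2) V ℂ := Matrix.of fun j y => if y = ![b, a] j then 1 else 0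
  have hu : IsUnit N.det := isUnit_iff_ne_zero.2 hN
  have hinv : N.map Complex.ofRealHom * (N⁻¹).map Complex.ofRealHom = 1 := by
    rw [← Matrix.map_mul, Matrix.mul_nonsing_inv _ hu]
    simp
  have hM : (Matrix.of fun x y : V => (N x y : ℂ) +
      ((if x = a ∧ y = b then Complex.I else 0) + (if x = b ∧ y = a then Complex.I else 0)))
      = N.map Complex.ofRealHom * (1 + ((N⁻¹).map Complex.ofRealHom * U) * W) := by
    rw [mul_add, mul_one, Matrix.mul_assoc, ← Matrix.mul_assoc, hinv, one_mul]
    ext x y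
    have u0 : U x 0 = if x = a then Complex.I else 0 := rfl
    have u1 : U x 1 = if x = b then Complex.I else 0 := rfl
    have w0 : W 0 y = if y = b then 1 else 0 := rfl
    have w1 : W 1 y = if y = a then 1 else 0 := rfl
    rw [Matrix.add_apply, Matrix.mul_apply, Fin.sum_univ_two, u0, u1, w0, w1, Matrix.of_apply,
      ite_and, ite_and, Matrix.map_apply]
    simp
    congr 1 <;> split_ifs <;> rfl
  have hent : ∀ i j, (W * ((N⁻¹).map Complex.ofRealHom * U)) i j =
      ((N⁻¹ (![b, a] i) (![a, b] j) : ℝ) : ℂ) * Complex.I := by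
    intro i j
    simp [Matrix.mul_apply, U, W]
  rw [hM, Matrix.det_mul, Matrix.det_one_add_mul_comm, Matrix.det_fin_two]
  have hd : (N.map Complex.ofRealHom).det = (N.det : ℂ) := by
    have := RingHom.map_det Complex.ofRealHom N
    simpa using this.symm
  rw [hd, Complex.im_ofReal_mul]
  simp only [Matrix.add_apply, hent]
  simp [add_comm]

theorem det_im_neg [Fintype V] [DecidableEq V] (G F : SimpleGraph V)
    [DecidableRel G.Adj] (hac : F.IsAcyclic) (a b : V)
    (hGF : ∀ x y, G.Adj x y ↔ F.Adj x y ∨ (x = a ∧ y = b) ∨ (x = b ∧ y = a))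
    (hab : a ≠ b) (p : F.Walk a b) (hp : p.IsPath) (hl : p.length % 4 = 2) (t : ℝ) (ht : 0 < t) :
    (Matrix.det (Matrix.of fun x y : V => (if x = y then (t : ℂ) else 0) +
        if G.Adj x y then Complex.I else 0)).im < 0 := by
  classical
  obtain ⟨col⟩ : Nonempty (F.Coloring Bool) :=
    ⟨hac.colorable_two.toColoring (by simp)⟩
  have hcab : col a = col b := by
    have := (col.even_length_iff_congr p).1 (Nat.even_iff.2 (by omega))
    cases ha : col a <;> cases hb : col b <;> simp_all
  let ε : V → ℝ := fun x => if col x then -1 else 1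
  let S : Matrix V V ℝ := Matrix.of fun x y => if F.Adj x y then ε x else 0
  have hSdef : ∀ x y, S x y = if F.Adj x y then ε x else 0 := fun _ _ => rfl
  have hεneg : ∀ x y, F.Adj x y → ε x = - ε y := by
    intro x y h
    have := col.valid h
    simp only [ε]
    cases hx : col x <;> cases hy : col y <;> simp_all
  have hS : ∀ x y, S x y = - S y x := by
    intro x y
    simp only [hSdef, F.adj_comm y x]
    split_ifs with h
    · exact hεneg x y h
    · simp
  have hε : ∀ x, ε x ≠ 0 := by
    intro x; simp only [ε]; split_ifs <;> norm_num
  set N : Matrix V V ℝ := t • (1 : Matrix V V ℝ) + S with hNdef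
  have hNpos : 0 < N.det := skew_det_pos S hS t ht
  have hmul : N * N⁻¹ = 1 := Matrix.mul_nonsing_inv _ (isUnit_iff_ne_zero.2 hNpos.ne')
  have hrow : ∀ w x, t * N⁻¹ x w + ∑ z, S x z * N⁻¹ z w = if x = w then 1 else 0 := by
    intro w x
    have := congrFun (congrFun hmul x) w
    rw [Matrix.one_apply] at this
    rw [← this]
    conv_rhs => rw [hNdef]
    rw [Matrix.add_mul, Matrix.smul_mul, Matrix.one_mul, Matrix.add_apply, Matrix.smul_apply,
      smul_eq_mul, Matrix.mul_apply]
  have hF1 : ∀ x y, S x y ≠ 0 → F.Adj x y := by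
    intro x y h
    by_contra hc
    exact h (by simp [hSdef, hc])
  have hF2 : ∀ x y, F.Adj x y → S x y = ε x := fun x y h => by simp [hSdef, h]
  have n1 : N⁻¹ a b < 0 := (path_sign F hac ε hε S hS hF1 hF2 t ht b (fun x => N⁻¹ x b)
    (hrow b) a p hp).2.2.1 hl
  have n2 : N⁻¹ b a < 0 := (path_sign F hac ε hε S hS hF1 hF2 t ht a (fun x => N⁻¹ x a)
    (hrow a) b p.reverse hp.reverse).2.2.1 (by simpa using hl)
  let d : V → ℂ := fun x => if col x then 1 else Complex.I
  let d' : V → ℂ := fun x => if col x then 1 else -Complex.I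
  have hdd : ∀ x, d' x * d x = 1 := by
    intro x; simp only [d, d']; split_ifs <;> simp
  have hnF : ∀ x y, F.Adj x y → ¬ ((x = a ∧ y = b)) ∧ ¬ (x = b ∧ y = a) := by
    intro x y h
    have := col.valid h
    constructor
    · rintro ⟨rfl, rfl⟩; exact this hcab
    · rintro ⟨rfl, rfl⟩; exact this hcab.symm
  have hconj : (Matrix.of fun x y : V => (N x y : ℂ) +
      ((if x = a ∧ y = b then Complex.I else 0) + (if x = b ∧ y = a then Complex.I else 0))) =
      Matrix.diagonal d' * (Matrix.of fun x y : V => (if x = y then (t : ℂ) else 0) +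
        if G.Adj x y then Complex.I else 0) * Matrix.diagonal d := by
    ext x y
    rw [Matrix.mul_diagonal, Matrix.diagonal_mul, Matrix.of_apply, Matrix.of_apply]
    have hNxy : (N x y : ℂ) = (if x = y then (t : ℂ) else 0) + (S x y : ℂ) := by
      rw [hNdef, Matrix.add_apply, Matrix.smul_apply, Matrix.one_apply]
      split_ifs <;> simp
    rw [hNxy, mul_add, add_mul, add_assoc]
    congr 1
    · split_ifs with h
      · subst h; linear_combination (-(t:ℂ)) * hdd x
      · simp
    · by_cases hadj : F.Adj x y
      · have hG : G.Adj x y := (hGF x y).2 (Or.inl hadj)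
        have h1 := hnF x y hadj
        rw [if_neg h1.1, if_neg h1.2, if_pos hG, hF2 x y hadj]
        have := col.valid hadj
        simp only [ε, d, d']
        cases hx : col x <;> cases hy : col y
        · exact absurd (hx.trans hy.symm) this
        · simp
        · simp
        · exact absurd (hx.trans hy.symm) this
      · have hS0 : S x y = 0 := by simp [hSdef, hadj]
        rw [hS0]
        by_cases h1 : x = a ∧ y = b
        · have h2 : ¬ (x = b ∧ y = a) := by rintro ⟨rfl, _⟩; exact hab h1.1.symm
          have hG : G.Adj x y := (hGF x y).2 (Or.inr (Or.inl h1))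
          rw [if_pos h1, if_neg h2, if_pos hG]
          have hc : d y = d x := by simp only [d]; rw [h1.1, h1.2, hcab]
          rw [hc]
          push_cast
          linear_combination (-Complex.I) * hdd x
        · by_cases h2 : x = b ∧ y = a
          · have hG : G.Adj x y := (hGF x y).2 (Or.inr (Or.inr h2))
            rw [if_neg h1, if_pos h2, if_pos hG]
            have hc : d y = d x := by simp only [d]; rw [h2.1, h2.2, hcab]
            rw [hc]
            push_cast
            linear_combination (-Complex.I) * hdd x
          · have hG : ¬ G.Adj x y := by rw [hGF]; tauto
            rw [if_neg h1, if_neg h2, if_neg hG]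
            simp
  have hfin := det_update_im N hNpos.ne' a b
  rw [hconj, Matrix.det_mul, Matrix.det_mul, mul_right_comm, ← Matrix.det_mul,
    Matrix.diagonal_mul_diagonal] at hfin
  simp only [hdd, Matrix.diagonal_one, Matrix.det_one, one_mul] at hfin
  rw [hfin]
  exact mul_neg_of_pos_of_neg hNpos (by linarith)

/-- A unicyclic graph whose unique cycle has length `k ≡ 3 (mod 4)` satisfies
`s⁺(G) > n > s⁻(G)`. -/
theorem unicyclic_three_mod_four [Fintype V] [DecidableEq V] (G : SimpleGraph V)
    [DecidableRel G.Adj]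
    (hconn : G.Connected) (hedge : G.edgeFinset.card = Fintype.card V)
    (v : V) (c : G.Walk v v) (hc : c.IsCycle) (hk : c.length % 4 = 3) :
    (Fintype.card V : ℝ) < sPlus G ∧ sMinus G < Fintype.card V := by
  classical
  have htr : ∑ i, (adjHerm G).eigenvalues i = 0 := by
    have := (adjHerm G).trace_eq_sum_eigenvalues
    rw [SimpleGraph.trace_adjMatrix] at this
    simpa using this.symm
  have hsq : ∑ i, (adjHerm G).eigenvalues i ^ 2 = 2 * Fintype.card V := by
    have e1 : (G.adjMatrix ℝ * G.adjMatrix ℝ).trace = 2 * Fintype.card V := by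
      simp only [Matrix.trace, Matrix.diag_apply, SimpleGraph.adjMatrix_mul_self_apply_self]
      rw [← Nat.cast_sum, SimpleGraph.sum_degrees_eq_twice_card_edges, hedge]
      push_cast
      ring
    rw [← e1]
    conv_rhs => rw [(adjHerm G).spectral_theorem, ← map_mul, Unitary.conjStarAlgAut_apply,
      Matrix.trace_mul_comm, ← mul_assoc]
    simp [Matrix.trace_diagonal, sq]
  have hpos : 0 < ∑ i, (adjHerm G).eigenvalues i * |(adjHerm G).eigenvalues i| := by
    apply sum_mul_abs_pos _ htr
    intro t ht
    rw [prod_eq_det]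
    cases c with
    | nil => simp at hk
    | @cons _ w _ h p =>
      rw [SimpleGraph.Walk.cons_isCycle_iff] at hc
      have hbr : ¬ G.IsBridge s(v, w) := by
        rw [SimpleGraph.isBridge_iff]
        push Not
        exact (SimpleGraph.Reachable.symm ⟨p.toDeleteEdge s(v, w) hc.2⟩)
      have hFc := hconn.connected_delete_edge_of_not_isBridge hbr
      have hFt : (G.deleteEdges {s(v, w)}).IsTree := by
        rw [SimpleGraph.isTree_iff_connected_and_card]
        refine ⟨hFc, ?_⟩
        rw [SimpleGraph.edgeSet_deleteEdges, Nat.card_coe_set_eq, Nat.card_eq_fintype_card,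
          ← hedge, Set.ncard_sdiff_singleton_add_one (show s(v, w) ∈ G.edgeSet from h), ← SimpleGraph.coe_edgeFinset,
          Set.ncard_coe_finset]
      refine det_im_neg G (G.deleteEdges {s(v, w)}) hFt.isAcyclic w v ?_ h.ne'
        (p.toDeleteEdge s(v, w) hc.2) ?_ ?_ t ht
      · intro x y
        rw [SimpleGraph.deleteEdges_adj, Set.mem_singleton_iff, Sym2.eq_iff]
        constructor
        · intro hxy; tauto
        · rintro (hxy | ⟨rfl, rfl⟩ | ⟨rfl, rfl⟩)
          · exact hxy.1
          · exact h.symm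
          · exact h
      · exact hc.1.toDeleteEdges _ _ _
      · simp at hk ⊢
        omega
  have h1 : sPlus G + sMinus G = 2 * Fintype.card V := by
    rw [← hsq, sPlus, sMinus, ← Finset.sum_add_distrib]
    refine Finset.sum_congr rfl fun i _ => ?_
    rcases lt_trichotomy ((adjHerm G).eigenvalues i) 0 with h | h | h
    · simp [h, h.le.not_gt]
    · simp [h]
    · simp [h, h.le.not_gt]
  have h2 : sPlus G - sMinus G =
      ∑ i, (adjHerm G).eigenvalues i * |(adjHerm G).eigenvalues i| := by
    rw [sPlus, sMinus, ← Finset.sum_sub_distrib]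
    refine Finset.sum_congr rfl fun i _ => ?_
    rcases lt_trichotomy ((adjHerm G).eigenvalues i) 0 with h | h | h
    · simp [h, h.le.not_gt, abs_of_neg h, sq]
    · simp [h]
    · simp [h, h.le.not_gt, abs_of_pos h, sq]
  constructor <;> linarith
end
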